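/- Under Condition (★), for every integer h ≥ 2, ∑_{m ∈ 𝒩_h(x)} ω(m) = κ·γ_h·x^{1/h}·log log x + κ·γ_h·𝔇₁·x^{1/h} + O_h(x^{1/h}/log x) as x → ∞, where the implied constant depends only on h and on the data P, N, κ, θ. -/

import Mathlib

open Filter Topology Asymptotics
open scoped Classical

noncomputable section

/-- The norm on the free abelian monoid `P →₀ ℕ`, extended multiplicatively
from the norm `N` on the prime elements. -/
def Nm {P : Type*} (N : P → ℕ) (m : P →₀ ℕ) : ℕ :=
  m.prod fun p k => N p ^ k

/-- The number of distinct prime elements generating `m`. -/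
def omegaM {P : Type*} (m : P →₀ ℕ) : ℕ := m.support.card

/-- `m` is `h`-free: every multiplicity is at most `h - 1`. -/
def HFree {P : Type*} (h : ℕ) (m : P →₀ ℕ) : Prop := ∀ p, m p ≤ h - 1

/-- `m` is `h`-full: every nonzero multiplicity is at least `h`. -/
def HFull {P : Type*} (h : ℕ) (m : P →₀ ℕ) : Prop := ∀ p, m p = 0 ∨ h ≤ m p

/-- Condition (★): `#{m : N(m) ≤ x} = κ·x + O(x^θ)` with `κ > 0`, `0 ≤ θ < 1`. -/
def StarCond {P : Type*} (N : P → ℕ) (κ θ : ℝ) : Prop :=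
  0 < κ ∧ 0 ≤ θ ∧ θ < 1 ∧
    (fun x : ℝ => (({m : P →₀ ℕ | (Nm N m : ℝ) ≤ x}.ncard : ℝ) - κ * x))
      =O[atTop] fun x : ℝ => x ^ θ

/-- The generalized zeta function `ζ_M(s) = ∑_m N(m)^{-s}`. -/
def zetaM {P : Type*} (N : P → ℕ) (s : ℝ) : ℝ :=
  ∑' m : P →₀ ℕ, 1 / (Nm N m : ℝ) ^ s

/-- The constant `γ_h`. -/
def gammah {P : Type*} (N : P → ℕ) (h : ℕ) : ℝ :=
  ∏' p : P, (1 + ((N p : ℝ) - (N p : ℝ) ^ (1 / (h : ℝ))) /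
    ((N p : ℝ) ^ 2 * ((N p : ℝ) ^ (1 / (h : ℝ)) - 1)))

/-- `A` is the Mertens constant `𝔄` of the prime system:
`𝔄 = lim (∑_{N(p) ≤ x} 1/N(p) − log log x)`. -/
def IsMertens {P : Type*} (N : P → ℕ) (A : ℝ) : Prop :=
  Tendsto (fun x : ℝ =>
      (∑ᶠ p ∈ {p : P | (N p : ℝ) ≤ x}, 1 / (N p : ℝ)) - Real.log (Real.log x))
    atTop (𝓝 A)

/-- The constant `𝔅 = -π²/6`. -/
def Bconst : ℝ := -(Real.pi ^ 2) / 6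

/-- The constant `ℭ₁`, given the Mertens constant `A`. -/
def C1const {P : Type*} (N : P → ℕ) (h : ℕ) (A : ℝ) : ℝ :=
  A - ∑' p : P, ((N p : ℝ) - 1) / ((N p : ℝ) * ((N p : ℝ) ^ h - 1))

/-- The constant `ℭ₂`, given the Mertens constant `A`. -/
def C2const {P : Type*} (N : P → ℕ) (h : ℕ) (A : ℝ) : ℝ :=
  C1const N h A ^ 2 + C1const N h A + Bconst -
    ∑' p : P, (((N p : ℝ) ^ (h - 1) - 1) / ((N p : ℝ) ^ h - 1)) ^ 2

/-- The convergent series `𝔏_h(r)`. -/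
def LhSum {P : Type*} (N : P → ℕ) (h : ℕ) (r : ℝ) : ℝ :=
  ∑' p : P, 1 / ((N p : ℝ) ^ (r / (h : ℝ) - 1) *
    ((N p : ℝ) - (N p : ℝ) ^ (1 - 1 / (h : ℝ)) + 1))

/-- The constant `𝔇₁`, given the Mertens constant `A`. -/
def D1const {P : Type*} (N : P → ℕ) (h : ℕ) (A : ℝ) : ℝ :=
  A - Real.log (h : ℝ) + LhSum N h ((h : ℝ) + 1) - LhSum N h (2 * (h : ℝ))

/-- The constant `𝔇₂`, given the Mertens constant `A`. -/
def D2const {P : Type*} (N : P → ℕ) (h : ℕ) (A : ℝ) : ℝ :=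
  D1const N h A ^ 2 + D1const N h A + Bconst -
    ∑' p : P, (1 / ((N p : ℝ) - (N p : ℝ) ^ (1 - 1 / (h : ℝ)) + 1)) ^ 2

/-- The error term `R_{S_h}(x)` for `h`-free counts. -/
def RSfree (h : ℕ) (θ : ℝ) (x : ℝ) : ℝ :=
  if 1 / (h : ℝ) < θ then x ^ θ
  else if 1 / (h : ℝ) = θ then x ^ (1 / (h : ℝ)) * Real.log x
  else x ^ (1 / (h : ℝ))

/-- The error term `R_{N_h}(x)` for `h`-full counts. -/
def RNfull (h : ℕ) (θ : ℝ) (x : ℝ) : ℝ :=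
  if (h : ℝ) / ((h : ℝ) + 1) < θ then x ^ (θ / (h : ℝ))
  else if ∃ i : ℕ, 1 ≤ i ∧ i ≤ h - 1 ∧ θ = (h : ℝ) / ((h : ℝ) + (i : ℝ)) then
    x ^ (1 / ((h : ℝ) + 1)) * Real.log x
  else x ^ (1 / ((h : ℝ) + 1))

/-!
An `h`-full element is uniquely `h • a + b`, where every nonzero multiplicity of `b` lies strictly
between `h` and `2 * h`. The sum of `ω` is the sum over the primes `p`, `N(p) ≤ x ^ (1 / h)`, of the
number of `h`-full multiples of `p`. For fixed `b` the norm condition reads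
`N(a) ≤ (x / N(b)) ^ (1 / h)`, so Condition (★) counts the admissible `a`; summing over `b`, the
Euler product of the `b` gives the main term `κ γ_h x ^ (1 / h) / (N(p) - N(p) ^ (1 - 1 / h) + 1)`
with an error `O(x ^ (α / h) N(p) ^ (-α))` for some `α < 1`. Chebyshev's bound makes the sum of
these errors over `p` at most a constant times `x ^ (1 / h) / log x`.

Since `1 / (q - q ^ (1 - 1 / h) + 1)` is `1 / q` plus the difference of the summands of
`𝔏_h(h + 1)` and `𝔏_h(2 h)`, the main terms are summed by Mertens' theorem with error
`O(1 / log y)`. Chebyshev's bound comes from Möbius inversion of `log N(m) - y / N(m) + 1`, and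
Mertens' theorem then follows from `∑_{d ≤ m} Λ(d) = log N(m)` by partial summation.
-/

/-! ### Abel summation over finite families -/

section AbelSummation

open MeasureTheory

variable {ι : Type*} {s : Finset ι} {ν c : ι → ℝ} {a b : ℝ} {f f' : ℝ → ℝ}

lemma intervalIntegrable_indicator_Ici (hab : a ≤ b) (hf' : ContinuousOn f' (Set.Icc a b)) (x : ℝ) :
    IntervalIntegrable ((Set.Ici x).indicator f') volume a b := by
  rw [intervalIntegrable_iff_integrableOn_Ioc_of_le hab]
  exact (hf'.integrableOn_Icc.mono_set Set.Ioc_subset_Icc_self).indicator measurableSet_Ici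

lemma integral_indicator_Ici_eq_sub {x : ℝ} (hx : x ∈ Set.Icc a b)
    (hf : ∀ t ∈ Set.Icc a b, HasDerivAt f (f' t) t) (hf' : ContinuousOn f' (Set.Icc a b)) :
    ∫ t in a..b, (Set.Ici x).indicator f' t = f b - f x := by
  have hsub : Set.uIcc x b ⊆ Set.Icc a b := by
    rw [Set.uIcc_of_le hx.2]
    exact Set.Icc_subset_Icc_left hx.1
  calc ∫ t in a..b, (Set.Ici x).indicator f' t
      = ∫ t in Set.Ioc a b, (Set.Ioi x).indicator f' t := by
        rw [intervalIntegral.integral_of_le (hx.1.trans hx.2)]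
        exact integral_congr_ae
          (ae_restrict_of_ae (indicator_ae_eq_of_ae_eq_set Ioi_ae_eq_Ici.symm))
    _ = ∫ t in x..b, f' t := by
        rw [setIntegral_indicator measurableSet_Ioi, Set.Ioc_inter_Ioi, sup_eq_right.2 hx.1,
          intervalIntegral.integral_of_le hx.2]
    _ = f b - f x := intervalIntegral.integral_eq_sub_of_hasDerivAt
        (fun t ht => hf t (hsub ht)) (hf'.mono hsub).intervalIntegrable

lemma sum_filter_mul_eq_sum_indicator (t : ℝ) :
    (∑ i ∈ s with ν i ≤ t, c i) * f' t = ∑ i ∈ s, c i * (Set.Ici (ν i)).indicator f' t := by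
  simp only [Finset.sum_mul, Finset.sum_filter, Set.indicator_apply, Set.mem_Ici, mul_ite, mul_zero,
    ite_mul, zero_mul]

lemma intervalIntegrable_sum_filter_mul (hab : a ≤ b) (hf' : ContinuousOn f' (Set.Icc a b)) :
    IntervalIntegrable (fun t => (∑ i ∈ s with ν i ≤ t, c i) * f' t) volume a b := by
  simp only [sum_filter_mul_eq_sum_indicator, ← Finset.sum_fn]
  exact IntervalIntegrable.sum _ fun i _ =>
    (intervalIntegrable_indicator_Ici hab hf' (ν i)).const_mul (c i)

lemma sum_mul_eq_sub_integral_sum_filter (hab : a ≤ b) (hν : ∀ i ∈ s, ν i ∈ Set.Icc a b)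
    (hf : ∀ t ∈ Set.Icc a b, HasDerivAt f (f' t) t) (hf' : ContinuousOn f' (Set.Icc a b)) :
    ∑ i ∈ s, c i * f (ν i) =
      (∑ i ∈ s, c i) * f b - ∫ t in a..b, (∑ i ∈ s with ν i ≤ t, c i) * f' t := by
  simp only [sum_filter_mul_eq_sum_indicator]
  rw [intervalIntegral.integral_finsetSum fun i _ =>
      (intervalIntegrable_indicator_Ici hab hf' (ν i)).const_mul (c i), Finset.sum_mul,
    ← Finset.sum_sub_distrib]
  refine Finset.sum_congr rfl fun i hi => ?_
  rw [intervalIntegral.integral_const_mul, integral_indicator_Ici_eq_sub (hν i hi) hf hf']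
  ring

lemma hasDerivAt_rpow_neg (s : ℝ) {t : ℝ} (ht : 0 < t) :
    HasDerivAt (fun t : ℝ => t ^ (-s)) (-s * t ^ (-s - 1)) t :=
  Real.hasDerivAt_rpow_const (Or.inl ht.ne')

lemma continuousOn_rpow_Icc_one (r y : ℝ) : ContinuousOn (fun t : ℝ => t ^ r) (Set.Icc 1 y) :=
  continuousOn_id.rpow_const fun _ ht => Or.inl (zero_lt_one.trans_le ht.1).ne'

lemma sum_mul_rpow_neg_le {C y r : ℝ} (hr : 0 ≤ r) (hr1 : r ≠ 1) (hy : 1 ≤ y)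
    (hν : ∀ i ∈ s, ν i ∈ Set.Icc 1 y)
    (hc : ∀ t ∈ Set.Icc 1 y, ∑ i ∈ s with ν i ≤ t, c i ≤ C * t) :
    ∑ i ∈ s, c i * ν i ^ (-r) ≤ C * ((y ^ (1 - r) - r) / (1 - r)) := by
  have h1r : 1 - r ≠ 0 := sub_ne_zero.2 hr1.symm
  have hderiv : ContinuousOn (fun t : ℝ => -r * t ^ (-r - 1)) (Set.Icc 1 y) :=
    (continuousOn_rpow_Icc_one _ y).const_mul _
  have hinteg := intervalIntegrable_sum_filter_mul (s := s) (ν := ν) (c := c) hy hderiv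
  have hpow : ∀ t ∈ Set.Icc 1 y, t ^ (-r) = t * t ^ (-r - 1) := fun t ht => by
    rw [Real.rpow_sub_one (by linarith [ht.1])]
    field_simp [show t ≠ 0 by linarith [ht.1]]
  have hpartial : ∫ t in (1 : ℝ)..y, (-r * C) * t ^ (-r) ≤
      ∫ t in (1 : ℝ)..y, (∑ i ∈ s with ν i ≤ t, c i) * (-r * t ^ (-r - 1)) := by
    refine intervalIntegral.integral_mono_on hy ?_ hinteg fun t ht => ?_
    · exact ((continuousOn_rpow_Icc_one _ y).const_mul _).intervalIntegrable_of_Icc hy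
    · have ht0 : (0 : ℝ) < t := by linarith [ht.1]
      have hweight : 0 ≤ r * t ^ (-r - 1) := by positivity
      rw [hpow t ht]
      linarith [mul_le_mul_of_nonneg_right (hc t ht) hweight]
  have hall : ∑ i ∈ s, c i ≤ C * y := by
    simpa only [Finset.filter_true_of_mem fun i hi => (hν i hi).2] using hc y ⟨hy, le_rfl⟩
  rw [sum_mul_eq_sub_integral_sum_filter hy hν
    (fun t ht => hasDerivAt_rpow_neg r (by linarith [ht.1])) hderiv]
  rw [intervalIntegral.integral_const_mul, integral_rpow (Or.inr ⟨by contrapose! hr1; linarith, by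
    rw [Set.uIcc_of_le hy]; exact fun h => by linarith [h.1]⟩), Real.one_rpow] at hpartial
  calc _ ≤ C * y * y ^ (-r) - -r * C * ((y ^ (-r + 1) - 1) / (-r + 1)) := by gcongr
    _ = _ := by
      rw [show -r + 1 = 1 - r by ring, show y ^ (-r) = y ^ (1 - r) / y by
        rw [← Real.rpow_sub_one (by linarith)]; congr 1; ring]
      field_simp
      ring

end AbelSummation

/-! ### Integrals of a function with linear growth -/

section LinearGrowth

open MeasureTheory

variable {A : ℝ → ℝ} {κ C α y : ℝ}

lemma abs_div_sq_sub_le (hAκ : ∀ t, 1 ≤ t → |A t - κ * t| ≤ C * t ^ α) {t : ℝ} (ht : 1 ≤ t) :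
    |A t / t ^ 2 - κ / t| ≤ C * t ^ (α - 2) := by
  have ht0 : 0 < t := by linarith
  rw [show A t / t ^ 2 - κ / t = (A t - κ * t) / t ^ 2 by field_simp, abs_div,
    abs_of_pos (pow_pos ht0 2), Real.rpow_sub ht0, Real.rpow_two, ← mul_div_assoc]
  gcongr
  exact hAκ t ht

lemma integrableOn_Ioi_div_sq_sub (hA : Measurable A) (hα : α < 1)
    (hAκ : ∀ t, 1 ≤ t → |A t - κ * t| ≤ C * t ^ α) :
    IntegrableOn (fun t => A t / t ^ 2 - κ / t) (Set.Ioi 1) :=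
  ((integrableOn_Ioi_rpow_of_lt (by linarith : α - 2 < -1) zero_lt_one).const_mul C).mono'
    (by fun_prop)
    ((ae_restrict_mem measurableSet_Ioi).mono fun _ ht => abs_div_sq_sub_le hAκ (le_of_lt ht))

lemma intervalIntegrable_div_sq_sub (hA : Measurable A) (hα : α < 1)
    (hAκ : ∀ t, 1 ≤ t → |A t - κ * t| ≤ C * t ^ α) (hy : 1 ≤ y) :
    IntervalIntegrable (fun t => A t / t ^ 2 - κ / t) volume 1 y :=
  (intervalIntegrable_iff_integrableOn_Ioc_of_le hy).2
    ((integrableOn_Ioi_div_sq_sub hA hα hAκ).mono_set Set.Ioc_subset_Ioi_self)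

lemma intervalIntegrable_div_one (κ : ℝ) (hy : 1 ≤ y) :
    IntervalIntegrable (fun t : ℝ => κ / t) volume 1 y :=
  (continuousOn_const.div continuousOn_id fun t ht => by
    exact (zero_lt_one.trans_le ht.1).ne').intervalIntegrable_of_Icc hy

lemma exists_abs_integral_div_sq_sub_log_le (hA : Measurable A) (hα : α < 1)
    (hAκ : ∀ t, 1 ≤ t → |A t - κ * t| ≤ C * t ^ α) :
    ∃ c : ℝ, ∀ y, 1 ≤ y →
      |(∫ t in (1 : ℝ)..y, A t / t ^ 2) - κ * Real.log y - c| ≤ C / (1 - α) * y ^ (α - 1) := by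
  have hint := integrableOn_Ioi_div_sq_sub hA hα hAκ
  refine ⟨∫ t in Set.Ioi 1, (A t / t ^ 2 - κ / t), fun y hy => ?_⟩
  have hy0 : 0 < y := by linarith
  have hsplit : ∫ t in (1 : ℝ)..y, A t / t ^ 2 =
      (∫ t in (1 : ℝ)..y, (A t / t ^ 2 - κ / t)) + κ * Real.log y := by
    have hlog : ∫ t in (1 : ℝ)..y, κ / t = κ * Real.log y := by
      simp only [div_eq_mul_inv]
      rw [intervalIntegral.integral_const_mul, integral_inv_of_pos one_pos hy0, div_one]
    rw [← hlog, ← intervalIntegral.integral_add (intervalIntegrable_div_sq_sub hA hα hAκ hy)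
      (intervalIntegrable_div_one κ hy)]
    simp only [sub_add_cancel]
  have htail := intervalIntegral.integral_Ioi_sub_Ioi hint hy
  rw [hsplit, add_sub_cancel_right, ← htail, sub_sub_cancel_left, abs_neg, ← Real.norm_eq_abs]
  calc ‖∫ t in Set.Ioi y, (A t / t ^ 2 - κ / t)‖
      ≤ ∫ t in Set.Ioi y, C * t ^ (α - 2) := by
        refine norm_integral_le_of_norm_le
          ((integrableOn_Ioi_rpow_of_lt (by linarith) hy0).const_mul C) ?_
        filter_upwards [ae_restrict_mem measurableSet_Ioi] with t ht
        exact abs_div_sq_sub_le hAκ (hy.trans (le_of_lt ht))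
    _ = C / (1 - α) * y ^ (α - 1) := by
        rw [integral_const_mul, integral_Ioi_rpow_of_lt (by linarith) hy0,
          show α - 2 + 1 = α - 1 by ring, ← neg_sub α 1, div_neg, neg_div]
        ring

lemma abs_div_sub_le (hAκ : ∀ t, 1 ≤ t → |A t - κ * t| ≤ C * t ^ α) {t : ℝ} (ht : 1 ≤ t) :
    |A t / t - κ| ≤ C * t ^ (α - 1) := by
  have ht0 : 0 < t := by linarith
  rw [show A t / t - κ = (A t - κ * t) / t by field_simp, abs_div, abs_of_pos ht0,
    Real.rpow_sub_one ht0.ne', ← mul_div_assoc]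
  gcongr
  exact hAκ t ht

lemma abs_integral_div_sub_le (hA : Measurable A) (hα : 0 < α)
    (hAκ : ∀ t, 1 ≤ t → |A t - κ * t| ≤ C * t ^ α) (hy : 1 ≤ y) :
    |(∫ t in (1 : ℝ)..y, A t / t) - κ * y| ≤ (C / α + |κ|) * y ^ α := by
  have hC : 0 ≤ C := by simpa using (abs_nonneg _).trans (hAκ 1 le_rfl)
  have hpow : IntervalIntegrable (fun t : ℝ => C * t ^ (α - 1)) volume 1 y :=
    (intervalIntegral.intervalIntegrable_rpow' (by linarith)).const_mul C
  have hint : IntervalIntegrable (fun t => A t / t - κ) volume 1 y := by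
    refine hpow.mono_fun' ((hA.div measurable_id).sub_const κ).aestronglyMeasurable ?_
    rw [Set.uIoc_of_le hy]
    filter_upwards [ae_restrict_mem measurableSet_Ioc] with t ht
    exact abs_div_sub_le hAκ ht.1.le
  have hsplit : ∫ t in (1 : ℝ)..y, A t / t = (∫ t in (1 : ℝ)..y, (A t / t - κ)) + (y - 1) * κ := by
    rw [← smul_eq_mul, ← intervalIntegral.integral_const, ← intervalIntegral.integral_add hint
      intervalIntegrable_const]
    simp only [sub_add_cancel]
  have herr : |∫ t in (1 : ℝ)..y, (A t / t - κ)| ≤ C / α * y ^ α := by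
    calc |∫ t in (1 : ℝ)..y, (A t / t - κ)| ≤ ∫ t in (1 : ℝ)..y, C * t ^ (α - 1) := by
          rw [← Real.norm_eq_abs]
          exact intervalIntegral.norm_integral_le_of_norm_le hy
            (.of_forall fun t ht => abs_div_sub_le hAκ ht.1.le) hpow
      _ = C / α * (y ^ α - 1) := by
          rw [intervalIntegral.integral_const_mul, integral_rpow (Or.inl (by linarith)),
            sub_add_cancel, Real.one_rpow]
          ring
      _ ≤ C / α * y ^ α := by gcongr; linarith
  calc _ = |(∫ t in (1 : ℝ)..y, (A t / t - κ)) + -κ| := by rw [hsplit]; congr 1; ring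
    _ ≤ C / α * y ^ α + |κ| * 1 := by
        rw [mul_one, ← abs_neg κ]
        exact (abs_add_le _ _).trans (by gcongr)
    _ ≤ (C / α + |κ|) * y ^ α := by
        rw [add_mul]
        gcongr
        exact Real.one_le_rpow hy hα.le

end LinearGrowth

/-! ### Elements of bounded norm -/

section Norm

variable {P : Type*} {N : P → ℕ}

lemma Nm_zero : Nm N 0 = 1 := Finsupp.prod_zero_index

lemma Nm_add (m n : P →₀ ℕ) : Nm N (m + n) = Nm N m * Nm N n :=
  Finsupp.prod_add_index' (fun _ => pow_zero _) fun _ => pow_add _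

lemma Nm_single (p : P) (k : ℕ) : Nm N (Finsupp.single p k) = N p ^ k :=
  Finsupp.prod_single_index (pow_zero _)

lemma Nm_smul (k : ℕ) (m : P →₀ ℕ) : Nm N (k • m) = Nm N m ^ k := by
  induction k with
  | zero => rw [zero_smul, pow_zero, Nm_zero]
  | succ k ih => rw [succ_nsmul, Nm_add, ih, pow_succ]

/-- Only finitely many elements of the free abelian monoid on `P` have norm below a given bound. -/
def NormFinite (N : P → ℕ) : Prop := ∀ y : ℝ, {m : P →₀ ℕ | (Nm N m : ℝ) ≤ y}.Finite

namespace NormFinite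

-- Otherwise all multiples of `p` would have norm at most `1`.
lemma two_le (hf : NormFinite N) (p : P) : 2 ≤ N p := by
  by_contra! hp
  refine Set.infinite_of_injective_forall_mem (Finsupp.single_injective p |>.comp
    Nat.succ_injective) (fun k => ?_) (hf 1)
  simp only [Function.comp_apply, Set.mem_ofPred_eq, Nm_single]
  exact_mod_cast pow_le_one₀ (Nat.zero_le _) (Nat.lt_succ_iff.1 hp)

lemma two_le_cast (hf : NormFinite N) (p : P) : (2 : ℝ) ≤ N p := mod_cast hf.two_le p

lemma one_le_Nm (hf : NormFinite N) (m : P →₀ ℕ) : (1 : ℝ) ≤ Nm N m :=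
  mod_cast Finset.prod_pos fun p _ => pow_pos (zero_lt_two.trans_le (hf.two_le p)) _

lemma Nm_pos (hf : NormFinite N) (m : P →₀ ℕ) : (0 : ℝ) < Nm N m :=
  zero_lt_one.trans_le (hf.one_le_Nm m)

lemma Nm_mono (hf : NormFinite N) {m n : P →₀ ℕ} (hmn : m ≤ n) : (Nm N m : ℝ) ≤ Nm N n := by
  obtain ⟨k, rfl⟩ := exists_add_of_le hmn
  rw [Nm_add, Nat.cast_mul]
  exact le_mul_of_one_le_right (hf.Nm_pos m).le (hf.one_le_Nm k)

/-- The elements of norm at most `y`. -/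
def elementsLE (hf : NormFinite N) (y : ℝ) : Finset (P →₀ ℕ) := (hf y).toFinset

/-- The counting function `I(y)` of the elements of norm at most `y`. -/
def count (hf : NormFinite N) (y : ℝ) : ℝ := (hf.elementsLE y).card

lemma mem_elementsLE (hf : NormFinite N) {y : ℝ} {m : P →₀ ℕ} :
    m ∈ hf.elementsLE y ↔ (Nm N m : ℝ) ≤ y :=
  (hf y).mem_toFinset

lemma elementsLE_eq_empty (hf : NormFinite N) {y : ℝ} (hy : y < 1) : hf.elementsLE y = ∅ :=
  Finset.eq_empty_of_forall_notMem fun m hm =>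
    (hf.one_le_Nm m).not_gt ((hf.mem_elementsLE.1 hm).trans_lt hy)

lemma count_eq_zero (hf : NormFinite N) {y : ℝ} (hy : y < 1) : hf.count y = 0 := by
  rw [count, hf.elementsLE_eq_empty hy, Finset.card_empty, Nat.cast_zero]

lemma count_nonneg (hf : NormFinite N) (y : ℝ) : 0 ≤ hf.count y := Nat.cast_nonneg _

lemma count_mono (hf : NormFinite N) : Monotone hf.count := fun _ _ hyz =>
  Nat.cast_le.2 <| Finset.card_le_card fun _ hm =>
    hf.mem_elementsLE.2 <| (hf.mem_elementsLE.1 hm).trans hyz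

lemma filter_elementsLE (hf : NormFinite N) {y t : ℝ} (hty : t ≤ y) :
    {m ∈ hf.elementsLE y | (Nm N m : ℝ) ≤ t} = hf.elementsLE t := by
  ext m
  simp only [Finset.mem_filter, mem_elementsLE, and_iff_right_iff_imp]
  exact fun hm => hm.trans hty

lemma finite_primes (hf : NormFinite N) (y : ℝ) : {p : P | (N p : ℝ) ≤ y}.Finite := by
  refine Set.Finite.of_finite_image ((hf y).subset ?_)
    (Finsupp.single_left_injective (one_ne_zero (α := ℕ))).injOn
  rintro _ ⟨p, hp, rfl⟩
  rwa [Set.mem_ofPred_eq, Nm_single, pow_one]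

/-- The prime elements of norm at most `y`. -/
def primesLE (hf : NormFinite N) (y : ℝ) : Finset P := (hf.finite_primes y).toFinset

lemma mem_primesLE (hf : NormFinite N) {y : ℝ} {p : P} : p ∈ hf.primesLE y ↔ (N p : ℝ) ≤ y :=
  (hf.finite_primes y).mem_toFinset

lemma filter_primesLE (hf : NormFinite N) {y t : ℝ} (hty : t ≤ y) :
    {p ∈ hf.primesLE y | (N p : ℝ) ≤ t} = hf.primesLE t := by
  ext p
  simp only [Finset.mem_filter, mem_primesLE, and_iff_right_iff_imp]
  exact fun hp => hp.trans hty

lemma sum_primesLE_le_sum_elementsLE (hf : NormFinite N) (y : ℝ) {g : (P →₀ ℕ) → ℝ} (hg : 0 ≤ g) :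
    ∑ p ∈ hf.primesLE y, g (Finsupp.single p 1) ≤ ∑ m ∈ hf.elementsLE y, g m := by
  have hinj : Set.InjOn (fun p : P => Finsupp.single p 1) (hf.primesLE y) :=
    (Finsupp.single_left_injective one_ne_zero).injOn
  rw [← Finset.sum_image hinj]
  refine Finset.sum_le_sum_of_subset_of_nonneg (Finset.image_subset_iff.2 fun p hp => ?_)
    fun m _ _ => hg m
  rwa [mem_elementsLE, Nm_single, pow_one, ← mem_primesLE]

end NormFinite

end Norm

/-! ### Möbius inversion and the von Mangoldt function -/

section Convolution

variable {P : Type*} {N : P → ℕ}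

/-- The Möbius function of the free abelian monoid on `P`. -/
def moebiusM (d : P →₀ ℕ) : ℝ := if ∀ p, d p ≤ 1 then (-1) ^ d.support.card else 0

/-- The von Mangoldt function of the free abelian monoid on `P`: it is `log (N p)` at the proper
powers of `p` and `0` elsewhere. -/
def vonMangoldtM (N : P → ℕ) (d : P →₀ ℕ) : ℝ :=
  if d.support.card = 1 then ∑ p ∈ d.support, Real.log (N p) else 0

lemma abs_moebiusM_le_one (d : P →₀ ℕ) : |moebiusM d| ≤ 1 := by
  rw [moebiusM]
  split_ifs
  · rw [abs_neg_one_pow]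
  · rw [abs_zero]
    exact zero_le_one

-- The squarefree elements below `k` correspond to the subsets of its support.
lemma sum_moebiusM_Iic (k : P →₀ ℕ) :
    ∑ d ∈ Finset.Iic k, moebiusM d = if k = 0 then 1 else 0 := by
  have hsub : ∑ S ∈ k.support.powerset, (-1 : ℝ) ^ S.card = if k = 0 then 1 else 0 := by
    simpa only [Finsupp.support_eq_empty, Int.cast_sum, Int.cast_pow, Int.cast_neg, Int.cast_one,
      Int.cast_ite, Int.cast_zero] using
      congrArg (Int.cast : ℤ → ℝ) (Finset.sum_powerset_neg_one_pow_card (x := k.support))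
  simp only [moebiusM]
  rw [← hsub, ← Finset.sum_filter]
  refine Finset.sum_bij' (fun d _ => d.support) (fun S _ => Finsupp.indicator S fun _ _ => 1)
    (fun d hd => ?_) (fun S hS => ?_) (fun d hd => ?_) (fun S _ => ?_) fun _ _ => rfl
  · exact Finset.mem_powerset.2 (Finsupp.support_mono (Finset.mem_Iic.1 (Finset.mem_filter.1 hd).1))
  · rw [Finset.mem_filter, Finset.mem_Iic]
    refine ⟨fun p => ?_, fun p => ?_⟩ <;> rw [Finsupp.indicator_apply] <;> split_ifs with hp
    · exact Nat.one_le_iff_ne_zero.2 (Finsupp.mem_support_iff.1 (Finset.mem_powerset.1 hS hp))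
    · exact Nat.zero_le _
    · exact le_rfl
    · exact zero_le_one
  · ext p
    have hp := (Finset.mem_filter.1 hd).2 p
    rw [Finsupp.indicator_apply]
    split_ifs with hsupp <;> rw [Finsupp.mem_support_iff] at hsupp <;> omega
  · ext p
    simp only [Finsupp.mem_support_iff, Finsupp.indicator_apply, dite_eq_ite, ne_eq,
      ite_eq_right_iff, one_ne_zero, imp_false, not_not]

lemma vonMangoldtM_nonneg (d : P →₀ ℕ) : 0 ≤ vonMangoldtM N d := by
  rw [vonMangoldtM]
  split_ifs
  · exact Finset.sum_nonneg fun p _ => Real.log_natCast_nonneg _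
  · exact le_rfl

lemma vonMangoldtM_single (p : P) {j : ℕ} (hj : j ≠ 0) :
    vonMangoldtM N (Finsupp.single p j) = Real.log (N p) := by
  rw [vonMangoldtM, Finsupp.support_single p hj, Finset.card_singleton, if_pos rfl,
    Finset.sum_singleton]

lemma sum_vonMangoldtM_mul {s : Finset (P →₀ ℕ)} {A : Finset P} {J : P → ℕ}
    (hs : ∀ p j, j ≠ 0 → (Finsupp.single p j ∈ s ↔ p ∈ A ∧ j ≤ J p)) (f : (P →₀ ℕ) → ℝ) :
    ∑ d ∈ s, vonMangoldtM N d * f d =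
      ∑ p ∈ A, ∑ j ∈ Finset.Icc 1 (J p), Real.log (N p) * f (Finsupp.single p j) := by
  rw [Finset.sum_sigma']
  symm
  refine Finset.sum_of_injOn (fun i => Finsupp.single i.1 i.2) ?_ ?_ ?_ ?_
  · rintro ⟨p, j⟩ hi ⟨q, k⟩ - hjk
    have hj : j ≠ 0 := Nat.one_le_iff_ne_zero.1
      (Finset.mem_Icc.1 (Finset.mem_sigma.1 (Finset.mem_coe.1 hi)).2).1
    rcases (Finsupp.single_eq_single_iff _ _ _ _).1 hjk with ⟨rfl, rfl⟩ | ⟨h0, -⟩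
    · rfl
    · exact absurd h0 hj
  · rintro ⟨p, j⟩ hi
    obtain ⟨hp, hj⟩ := Finset.mem_sigma.1 (Finset.mem_coe.1 hi)
    rw [Finset.mem_Icc] at hj
    exact (hs p j (Nat.one_le_iff_ne_zero.1 hj.1)).2 ⟨hp, hj.2⟩
  · intro d hd hnot
    rw [vonMangoldtM, if_neg, zero_mul]
    rw [Finsupp.card_support_eq_one]
    rintro ⟨p, hp, heq⟩
    rw [heq] at hd
    obtain ⟨hpA, hpJ⟩ := (hs p (d p) hp).1 hd
    exact hnot ⟨⟨p, d p⟩, Finset.mem_coe.2 (Finset.mem_sigma.2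
      ⟨hpA, Finset.mem_Icc.2 ⟨Nat.one_le_iff_ne_zero.2 hp, hpJ⟩⟩), heq.symm⟩
  · rintro ⟨p, j⟩ hi
    rw [vonMangoldtM_single p (Nat.one_le_iff_ne_zero.1
      (Finset.mem_Icc.1 (Finset.mem_sigma.1 hi).2).1)]

lemma sum_vonMangoldtM_Iic (hN : ∀ p, N p ≠ 0) (k : P →₀ ℕ) :
    ∑ d ∈ Finset.Iic k, vonMangoldtM N d = Real.log (Nm N k) := by
  have hs : ∀ p j, j ≠ 0 → (Finsupp.single p j ∈ Finset.Iic k ↔ p ∈ k.support ∧ j ≤ k p) :=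
    fun p j hj => by
      rw [Finset.mem_Iic, Finsupp.single_le_iff, Finsupp.mem_support_iff]
      omega
  have hsum := sum_vonMangoldtM_mul (N := N) hs fun _ => 1
  simp only [mul_one] at hsum
  rw [hsum, Nm, Finsupp.prod, Nat.cast_prod, Real.log_prod fun p _ => by
    exact_mod_cast pow_ne_zero _ (hN p)]
  refine Finset.sum_congr rfl fun p _ => ?_
  rw [Finset.sum_const, Nat.card_Icc, Nat.add_sub_cancel, nsmul_eq_mul, Nat.cast_pow, Real.log_pow]

namespace NormFinite

lemma sum_elementsLE_div_add (hf : NormFinite N) (d : P →₀ ℕ) (y : ℝ) (g : (P →₀ ℕ) → ℝ) :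
    ∑ m ∈ hf.elementsLE (y / Nm N d), g (m + d) = ∑ k ∈ hf.elementsLE y with d ≤ k, g k := by
  have hmem : ∀ m, m ∈ hf.elementsLE (y / Nm N d) ↔ m + d ∈ hf.elementsLE y := fun m => by
    rw [mem_elementsLE, mem_elementsLE, le_div_iff₀ (hf.Nm_pos d), Nm_add, Nat.cast_mul]
  refine Finset.sum_bij' (fun m _ => m + d) (fun k _ => k - d) (fun m hm => ?_) (fun k hk => ?_)
    (fun m _ => add_tsub_cancel_right m d) (fun k hk => ?_) fun _ _ => rfl
  · exact Finset.mem_filter.2 ⟨(hmem m).1 hm, le_add_self⟩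
  · rw [hmem, tsub_add_cancel_of_le (Finset.mem_filter.1 hk).2]
    exact (Finset.mem_filter.1 hk).1
  · exact tsub_add_cancel_of_le (Finset.mem_filter.1 hk).2

lemma sum_mul_sum_elementsLE_div_add (hf : NormFinite N) (a g : (P →₀ ℕ) → ℝ) (y : ℝ) :
    ∑ d ∈ hf.elementsLE y, a d * ∑ m ∈ hf.elementsLE (y / Nm N d), g (m + d) =
      ∑ k ∈ hf.elementsLE y, (∑ d ∈ Finset.Iic k, a d) * g k := by
  simp only [sum_elementsLE_div_add, Finset.mul_sum, Finset.sum_mul]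
  refine Finset.sum_comm' fun d k => ?_
  simp only [mem_elementsLE, Finset.mem_filter, Finset.mem_Iic]
  exact ⟨fun h => ⟨h.2.2, h.2.1⟩, fun h => ⟨(hf.Nm_mono h.1).trans h.2, h.2, h.1⟩⟩

lemma sum_sum_elementsLE_div_comm (hf : NormFinite N) (g : (P →₀ ℕ) → (P →₀ ℕ) → ℝ) (y : ℝ) :
    ∑ d ∈ hf.elementsLE y, ∑ e ∈ hf.elementsLE (y / Nm N d), g d e =
      ∑ e ∈ hf.elementsLE y, ∑ d ∈ hf.elementsLE (y / Nm N e), g d e := by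
  have hmem : ∀ d e, d ∈ hf.elementsLE y ∧ e ∈ hf.elementsLE (y / Nm N d) ↔
      (Nm N d * Nm N e : ℝ) ≤ y := fun d e => by
    rw [mem_elementsLE, mem_elementsLE, le_div_iff₀' (hf.Nm_pos d), and_iff_right_iff_imp]
    exact fun h => (le_mul_of_one_le_right (hf.Nm_pos d).le (hf.one_le_Nm e)).trans h
  refine Finset.sum_comm' fun d e => ?_
  rw [hmem, and_comm (b := e ∈ _), hmem, mul_comm]

theorem sum_moebiusM_mul_sum_elementsLE (hf : NormFinite N) {y : ℝ} (hy : 1 ≤ y)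
    (g : (P →₀ ℕ) → ℝ) :
    ∑ d ∈ hf.elementsLE y, moebiusM d * ∑ m ∈ hf.elementsLE (y / Nm N d), g (m + d) = g 0 := by
  have h0 : (0 : P →₀ ℕ) ∈ hf.elementsLE y := by rwa [mem_elementsLE, Nm_zero, Nat.cast_one]
  simp only [sum_mul_sum_elementsLE_div_add, sum_moebiusM_Iic, ite_mul, one_mul, zero_mul,
    Finset.sum_ite_eq', if_pos h0]

lemma sum_moebiusM_mul_count (hf : NormFinite N) {y : ℝ} (hy : 1 ≤ y) :
    ∑ d ∈ hf.elementsLE y, moebiusM d * hf.count (y / Nm N d) = 1 := by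
  simpa only [count, Finset.cast_card] using hf.sum_moebiusM_mul_sum_elementsLE hy fun _ => 1

lemma sum_vonMangoldtM_mul_count (hf : NormFinite N) (y : ℝ) :
    ∑ d ∈ hf.elementsLE y, vonMangoldtM N d * hf.count (y / Nm N d) =
      ∑ m ∈ hf.elementsLE y, Real.log (Nm N m) := by
  have hconv := hf.sum_mul_sum_elementsLE_div_add (vonMangoldtM N) (fun _ => 1) y
  simpa only [count, ← Finset.cast_card, mul_one,
    sum_vonMangoldtM_Iic fun p => (zero_lt_two.trans_le (hf.two_le p)).ne'] using hconv

/-- The Chebyshev function `ψ(y)`, the sum of the von Mangoldt function up to `y`. -/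
def psi (hf : NormFinite N) (y : ℝ) : ℝ := ∑ d ∈ hf.elementsLE y, vonMangoldtM N d

lemma psi_eq_sum_moebiusM_mul (hf : NormFinite N) (y : ℝ) :
    hf.psi y =
      ∑ d ∈ hf.elementsLE y, moebiusM d * ∑ m ∈ hf.elementsLE (y / Nm N d), Real.log (Nm N m) := by
  simp only [← sum_vonMangoldtM_mul_count, Finset.mul_sum]
  rw [sum_sum_elementsLE_div_comm, psi]
  refine Finset.sum_congr rfl fun e he => ?_
  have hy : 1 ≤ y / Nm N e := by rwa [one_le_div (hf.Nm_pos e), ← mem_elementsLE hf]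
  simp only [div_right_comm y, mul_left_comm (moebiusM _)]
  rw [← Finset.mul_sum, hf.sum_moebiusM_mul_count hy, mul_one]

end NormFinite

end Convolution

/-! ### Counting elements under Condition (★) -/

lemma isLittleO_rpow_id {θ : ℝ} (hθ : θ < 1) : (fun x : ℝ => x ^ θ) =o[atTop] fun x : ℝ => x := by
  rw [isLittleO_iff_tendsto' ((eventually_gt_atTop 0).mono fun x hx hx0 => absurd hx0 hx.ne')]
  refine (tendsto_rpow_neg_atTop (sub_pos.2 hθ)).congr' ?_
  filter_upwards [eventually_gt_atTop 0] with x hx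
  rw [neg_sub, Real.rpow_sub_one hx.ne']

namespace StarCond

variable {P : Type*} {N : P → ℕ} {κ θ : ℝ}

-- The cardinality of an infinite set is read as `0`, which would contradict `I(x) ~ κ x`.
lemma normFinite (hstar : StarCond N κ θ) : NormFinite N := by
  obtain ⟨hκ, -, hθ, hO⟩ := hstar
  intro y
  obtain ⟨x, hx, hyx, hx0⟩ := (((hO.trans_isLittleO (isLittleO_rpow_id hθ)).def (half_pos hκ)).and
    ((eventually_ge_atTop y).and (eventually_gt_atTop 0))).exists
  by_contra hinf
  have hinf' : {m : P →₀ ℕ | (Nm N m : ℝ) ≤ x}.Infinite := fun hfin =>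
    hinf (hfin.subset fun _ hm => le_trans hm hyx)
  rw [hinf'.ncard, Nat.cast_zero, zero_sub, norm_neg, Real.norm_of_nonneg (by positivity),
    Real.norm_of_nonneg hx0.le] at hx
  nlinarith

lemma exists_abs_count_sub_le_of_ge (hstar : StarCond N κ θ) :
    ∃ c z₀ : ℝ, 1 ≤ z₀ ∧ ∀ z, z₀ ≤ z → |hstar.normFinite.count z - κ * z| ≤ c * z ^ θ := by
  obtain ⟨c, hc⟩ := hstar.2.2.2.bound
  obtain ⟨z₀, hz₀⟩ := eventually_atTop.1 hc
  refine ⟨c, max z₀ 1, le_max_right _ _, fun z hz => ?_⟩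
  have hz1 : 0 ≤ z := zero_le_one.trans ((le_max_right _ _).trans hz)
  have hcount : ({m : P →₀ ℕ | (Nm N m : ℝ) ≤ z}.ncard : ℝ) = hstar.normFinite.count z := by
    rw [Set.ncard_eq_toFinset_card _ (hstar.normFinite z), NormFinite.count, NormFinite.elementsLE]
  simpa only [hcount, Real.norm_eq_abs, abs_of_nonneg (Real.rpow_nonneg hz1 θ)] using
    hz₀ z ((le_max_left _ _).trans hz)

lemma exists_abs_count_sub_le (hstar : StarCond N κ θ) {α : ℝ} (hα : θ ≤ α) (hα1 : α < 1) :
    ∃ C : ℝ, ∀ z, 0 < z → |hstar.normFinite.count z - κ * z| ≤ C * z ^ α := by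
  obtain ⟨c, z₀, hz₀, hlarge⟩ := hstar.exists_abs_count_sub_le_of_ge
  obtain ⟨hκ, hθ, -, -⟩ := id hstar
  set hf := hstar.normFinite
  have hcount₀ := hf.count_nonneg z₀
  refine ⟨|c| + (hf.count z₀ + κ * z₀), fun z hz => ?_⟩
  have hc := abs_nonneg c
  rcases lt_or_ge z 1 with hz1 | hz1
  · rw [hf.count_eq_zero hz1, zero_sub, abs_neg, abs_of_pos (by positivity)]
    have hzα : z ≤ z ^ α := by
      simpa only [Real.rpow_one] using Real.rpow_le_rpow_of_exponent_ge hz hz1.le hα1.le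
    gcongr
    nlinarith
  rcases le_total z₀ z with hzz₀ | hzz₀
  · calc |hf.count z - κ * z| ≤ c * z ^ θ := hlarge z hzz₀
      _ ≤ |c| * z ^ α := by
        gcongr
        exact le_abs_self c
      _ ≤ (|c| + (hf.count z₀ + κ * z₀)) * z ^ α := by
        gcongr
        have : 0 ≤ κ * z₀ := by positivity
        linarith
  · have hmono : hf.count z ≤ hf.count z₀ := hf.count_mono hzz₀
    have hκz : κ * z ≤ κ * z₀ := by gcongr
    have hκz0 : 0 ≤ κ * z := by positivity
    have hcount := hf.count_nonneg z
    calc |hf.count z - κ * z| ≤ |c| + (hf.count z₀ + κ * z₀) := by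
          rw [abs_le]
          constructor <;> linarith
      _ ≤ (|c| + (hf.count z₀ + κ * z₀)) * z ^ α :=
        le_mul_of_one_le_right (by linarith) (Real.one_le_rpow hz1 (hθ.trans hα))

lemma exists_count_le (hstar : StarCond N κ θ) :
    ∃ C : ℝ, ∀ t, 1 ≤ t → hstar.normFinite.count t ≤ C * t := by
  obtain ⟨C, hC⟩ := hstar.exists_abs_count_sub_le le_rfl hstar.2.2.1
  have hC0 : 0 ≤ C := by simpa using (abs_nonneg _).trans (hC 1 one_pos)
  refine ⟨C + κ, fun t ht => ?_⟩
  have hpow : t ^ θ ≤ t := by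
    simpa only [Real.rpow_one] using Real.rpow_le_rpow_of_exponent_le ht hstar.2.2.1.le
  linarith [le_of_abs_le (hC t (by linarith)), mul_le_mul_of_nonneg_left hpow hC0]

lemma exists_sum_elementsLE_rpow_neg_le_div (hstar : StarCond N κ θ) :
    ∃ C : ℝ, 0 ≤ C ∧ ∀ s, 0 ≤ s → s ≠ 1 → ∀ y, 1 ≤ y →
      ∑ m ∈ hstar.normFinite.elementsLE y, (Nm N m : ℝ) ^ (-s) ≤
        C * ((y ^ (1 - s) - s) / (1 - s)) := by
  obtain ⟨C, hC⟩ := hstar.exists_count_le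
  set hf := hstar.normFinite
  refine ⟨C, by simpa using (hf.count_nonneg 1).trans (hC 1 le_rfl), fun s hs hs1 y hy => ?_⟩
  have hsum := sum_mul_rpow_neg_le (s := hf.elementsLE y) (ν := fun m => (Nm N m : ℝ))
    (c := fun _ => 1) (C := C) hs hs1 hy
    (fun m hm => ⟨hf.one_le_Nm m, hf.mem_elementsLE.1 hm⟩) fun t ht => by
      rw [hf.filter_elementsLE ht.2, ← Finset.cast_card]
      exact hC t ht.1
  simpa only [one_mul] using hsum

lemma exists_sum_elementsLE_rpow_neg_le (hstar : StarCond N κ θ) {s : ℝ} (hs : 0 ≤ s)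
    (hs1 : s < 1) :
    ∃ C : ℝ, 0 ≤ C ∧ ∀ y, 0 ≤ y →
      ∑ m ∈ hstar.normFinite.elementsLE y, (Nm N m : ℝ) ^ (-s) ≤ C * y ^ (1 - s) := by
  obtain ⟨C, hC0, hC⟩ := hstar.exists_sum_elementsLE_rpow_neg_le_div
  have : 0 < 1 - s := sub_pos.2 hs1
  refine ⟨C / (1 - s), by positivity, fun y hy => ?_⟩
  rcases lt_or_ge y 1 with hy1 | hy1
  · rw [hstar.normFinite.elementsLE_eq_empty hy1, Finset.sum_empty]
    positivity
  · refine (hC s hs hs1.ne y hy1).trans ?_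
    rw [div_mul_eq_mul_div, mul_div_assoc]
    gcongr
    linarith

theorem summable_Nm_rpow_neg (hstar : StarCond N κ θ) {s : ℝ} (hs : 1 < s) :
    Summable fun m : P →₀ ℕ => (Nm N m : ℝ) ^ (-s) := by
  obtain ⟨C, hC0, hC⟩ := hstar.exists_sum_elementsLE_rpow_neg_le_div
  set hf := hstar.normFinite
  refine summable_of_sum_le (c := C * (s / (s - 1))) (fun m => by positivity) fun u => ?_
  set y : ℝ := max 1 (u.sup (Nm N) : ℕ)
  have hsub : u ⊆ hf.elementsLE y := fun m hm =>
    hf.mem_elementsLE.2 (le_max_of_le_right (Nat.cast_le.2 (Finset.le_sup hm)))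
  have : 0 < s - 1 := sub_pos.2 hs
  calc ∑ m ∈ u, (Nm N m : ℝ) ^ (-s) ≤ ∑ m ∈ hf.elementsLE y, (Nm N m : ℝ) ^ (-s) :=
        Finset.sum_le_sum_of_subset_of_nonneg hsub fun m _ _ => by positivity
    _ ≤ C * ((y ^ (1 - s) - s) / (1 - s)) := hC s (by linarith) hs.ne' y (le_max_left _ _)
    _ = C * ((s - y ^ (1 - s)) / (s - 1)) := by rw [← neg_sub s, ← neg_sub s 1, neg_div_neg_eq]
    _ ≤ C * (s / (s - 1)) := by
        gcongr
        linarith [Real.rpow_nonneg (zero_le_one.trans (le_max_left 1 _) : 0 ≤ y) (1 - s)]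

lemma summable_prime_rpow_neg (hstar : StarCond N κ θ) {s : ℝ} (hs : 1 < s) :
    Summable fun p : P => (N p : ℝ) ^ (-s) := by
  refine ((hstar.summable_Nm_rpow_neg hs).comp_injective
    (Finsupp.single_left_injective (one_ne_zero (α := ℕ)))).congr fun p => ?_
  rw [Function.comp_apply, Nm_single, pow_one]

end StarCond

/-! ### The Chebyshev bound -/

namespace NormFinite

variable {P : Type*} {N : P → ℕ}

lemma sum_elementsLE_eq_sub_integral (hf : NormFinite N) {y : ℝ} (hy : 1 ≤ y) {f f' : ℝ → ℝ}
    (hff' : ∀ t ∈ Set.Icc 1 y, HasDerivAt f (f' t) t) (hf' : ContinuousOn f' (Set.Icc 1 y)) :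
    ∑ m ∈ hf.elementsLE y, f (Nm N m) =
      hf.count y * f y - ∫ t in (1 : ℝ)..y, hf.count t * f' t := by
  have habel := sum_mul_eq_sub_integral_sum_filter (s := hf.elementsLE y) (c := fun _ => 1)
    (ν := fun m => (Nm N m : ℝ)) hy (fun m hm => ⟨hf.one_le_Nm m, hf.mem_elementsLE.1 hm⟩) hff' hf'
  simp only [one_mul, ← Finset.cast_card] at habel
  rw [habel, count]
  congr 1
  refine intervalIntegral.integral_congr fun t ht => ?_
  rw [Set.uIcc_of_le hy] at ht
  simp only [count, hf.filter_elementsLE ht.2]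

lemma sum_log_Nm_eq_sub_integral (hf : NormFinite N) {y : ℝ} (hy : 1 ≤ y) :
    ∑ m ∈ hf.elementsLE y, Real.log (Nm N m) =
      hf.count y * Real.log y - ∫ t in (1 : ℝ)..y, hf.count t / t := by
  have hne : ∀ t ∈ Set.Icc 1 y, t ≠ 0 := fun t ht => (zero_lt_one.trans_le ht.1).ne'
  simpa only [div_eq_mul_inv] using hf.sum_elementsLE_eq_sub_integral hy
    (fun t ht => Real.hasDerivAt_log (hne t ht)) (continuousOn_id.inv₀ hne)

/-- The sum of `log N(m) - y / N(m) + 1` over `N(m) ≤ y`. The weights are chosen so that the main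
terms `κ y log y` cancel, and so that its Möbius transform is `ψ(y) - y + 1`. -/
def balancedLogSum (hf : NormFinite N) (y : ℝ) : ℝ :=
  ∑ m ∈ hf.elementsLE y, (Real.log (Nm N m) - y / Nm N m + 1)

lemma balancedLogSum_eq_sub_integral (hf : NormFinite N) {y : ℝ} (hy : 1 ≤ y) :
    hf.balancedLogSum y = hf.count y * Real.log y - (∫ t in (1 : ℝ)..y, hf.count t / t) -
      y * ∫ t in (1 : ℝ)..y, hf.count t / t ^ 2 := by
  have hne : ∀ t ∈ Set.Icc 1 y, t ≠ 0 := fun t ht => (zero_lt_one.trans_le ht.1).ne'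
  have hint : ∀ k : ℕ, IntervalIntegrable (fun t => hf.count t / t ^ k) MeasureTheory.volume 1 y :=
    fun k => by
      simp only [div_eq_mul_inv]
      refine hf.count_mono.intervalIntegrable.mul_continuousOn ?_
      rw [Set.uIcc_of_le hy]
      exact (continuousOn_id.pow k).inv₀ fun t ht => pow_ne_zero k (hne t ht)
  have hderiv : ∀ t ∈ Set.Icc 1 y,
      HasDerivAt (fun t => Real.log t - y / t + 1) (1 / t + y / t ^ 2) t := fun t ht => by
    have hinv := (hasDerivAt_inv (hne t ht)).const_mul y
    convert! ((Real.hasDerivAt_log (hne t ht)).sub hinv).add_const 1 using 1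
    ring
  have hcont : ContinuousOn (fun t => 1 / t + y / t ^ 2) (Set.Icc 1 y) :=
    (continuousOn_const.div continuousOn_id hne).add
      (continuousOn_const.div (continuousOn_id.pow 2) fun t ht => pow_ne_zero 2 (hne t ht))
  rw [balancedLogSum, hf.sum_elementsLE_eq_sub_integral (f := fun t => Real.log t - y / t + 1) hy
    hderiv hcont, div_self (zero_lt_one.trans_le hy).ne', sub_add_cancel, sub_sub,
    ← intervalIntegral.integral_const_mul, ← intervalIntegral.integral_add
      (by simpa only [pow_one] using hint 1) ((hint 2).const_mul y)]
  congr 2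
  ext t
  ring

lemma psi_eq_sum_moebiusM_mul_balancedLogSum (hf : NormFinite N) {y : ℝ} (hy : 1 ≤ y) :
    hf.psi y = y - 1 + ∑ d ∈ hf.elementsLE y, moebiusM d * hf.balancedLogSum (y / Nm N d) := by
  have hinv := hf.sum_moebiusM_mul_sum_elementsLE hy fun k => y / Nm N k
  have hcount := hf.sum_moebiusM_mul_count hy
  simp only [Nm_zero, Nat.cast_one, div_one, Nm_add, Nat.cast_mul] at hinv
  have hterm : ∀ d, moebiusM d * hf.balancedLogSum (y / Nm N d) =
      moebiusM d * ∑ m ∈ hf.elementsLE (y / Nm N d), Real.log (Nm N m) -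
        moebiusM d * ∑ m ∈ hf.elementsLE (y / Nm N d), y / (Nm N m * Nm N d) +
        moebiusM d * hf.count (y / Nm N d) := fun d => by
    rw [balancedLogSum, Finset.sum_add_distrib, Finset.sum_sub_distrib, ← Finset.cast_card, ← count]
    simp only [div_div, mul_comm (Nm N d : ℝ)]
    ring
  simp only [hterm, Finset.sum_add_distrib, Finset.sum_sub_distrib]
  rw [hinv, hcount, ← hf.psi_eq_sum_moebiusM_mul]
  ring

end NormFinite

namespace StarCond

variable {P : Type*} {N : P → ℕ} {κ θ : ℝ}

lemma exists_abs_count_mul_log_sub_le (hstar : StarCond N κ θ) {α β : ℝ} (hα : θ ≤ α) (hαβ : α < β)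
    (hα1 : α < 1) :
    ∃ C : ℝ, ∀ y, 1 ≤ y →
      |hstar.normFinite.count y * Real.log y - κ * y * Real.log y| ≤ C * y ^ β := by
  obtain ⟨C, hC⟩ := hstar.exists_abs_count_sub_le hα hα1
  refine ⟨C / (β - α), fun y hy => ?_⟩
  have hy0 : 0 < y := by linarith
  rw [← sub_mul, abs_mul, abs_of_nonneg (Real.log_nonneg hy)]
  calc |hstar.normFinite.count y - κ * y| * Real.log y
      ≤ C * y ^ α * (y ^ (β - α) / (β - α)) := by
        have hCy := (abs_nonneg _).trans (hC y hy0)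
        have hlog := Real.log_le_rpow_div hy0.le (sub_pos.2 hαβ)
        have hlog0 := Real.log_nonneg hy
        gcongr
        exact hC y hy0
    _ = C / (β - α) * (y ^ α * y ^ (β - α)) := by ring
    _ = C / (β - α) * y ^ β := by rw [← Real.rpow_add hy0, add_sub_cancel]

theorem exists_abs_sum_log_Nm_sub_le (hstar : StarCond N κ θ) :
    ∃ K : ℝ, ∀ y, 1 ≤ y →
      |∑ m ∈ hstar.normFinite.elementsLE y, Real.log (Nm N m) - κ * y * Real.log y| ≤ K * y := by
  obtain ⟨-, hθ0, hθ1, -⟩ := id hstar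
  obtain ⟨α, hθα, hα1⟩ := exists_between hθ1
  obtain ⟨C, hC⟩ := hstar.exists_abs_count_sub_le hθα.le hα1
  obtain ⟨C', hC'⟩ := hstar.exists_abs_count_mul_log_sub_le hθα.le hα1 hα1
  set hf := hstar.normFinite
  have hα0 : 0 < α := hθ0.trans_lt hθα
  have hC0 : 0 ≤ C := by simpa using (abs_nonneg _).trans (hC 1 one_pos)
  refine ⟨C' + (C / α + |κ|) + |κ|, fun y hy => ?_⟩
  have hint := abs_integral_div_sub_le hf.count_mono.measurable hα0
    (fun t ht => hC t (zero_lt_one.trans_le ht)) hy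
  have hmain := hC' y hy
  have hpow : y ^ α ≤ y := by
    simpa only [Real.rpow_one] using Real.rpow_le_rpow_of_exponent_le hy hα1.le
  rw [hf.sum_log_Nm_eq_sub_integral hy]
  rw [Real.rpow_one] at hmain
  calc _ = |(hf.count y * Real.log y - κ * y * Real.log y) -
        ((∫ t in (1 : ℝ)..y, hf.count t / t) - κ * y) - κ * y| := by congr 1; ring
    _ ≤ C' * y + (C / α + |κ|) * y ^ α + |κ| * y := by
        refine (abs_sub _ _).trans (add_le_add ((abs_sub _ _).trans (add_le_add hmain hint)) ?_)
        rw [abs_mul, abs_of_pos (by linarith : 0 < y)]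
    _ ≤ C' * y + (C / α + |κ|) * y + |κ| * y := by gcongr
    _ = (C' + (C / α + |κ|) + |κ|) * y := by ring

lemma exists_abs_balancedLogSum_sub_le (hstar : StarCond N κ θ) :
    ∃ c K β : ℝ, θ ≤ β ∧ β < 1 ∧
      ∀ y, 1 ≤ y → |hstar.normFinite.balancedLogSum y - c * y| ≤ K * y ^ β := by
  obtain ⟨-, hθ0, hθ1, -⟩ := id hstar
  obtain ⟨α, hθα, hα1⟩ := exists_between hθ1
  obtain ⟨β, hαβ, hβ1⟩ := exists_between hα1
  obtain ⟨C, hC⟩ := hstar.exists_abs_count_sub_le hθα.le hα1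
  obtain ⟨C', hC'⟩ := hstar.exists_abs_count_mul_log_sub_le hθα.le hαβ hα1
  set hf := hstar.normFinite
  have hα0 : 0 < α := hθ0.trans_lt hθα
  have : 0 < 1 - α := sub_pos.2 hα1
  have hC0 : 0 ≤ C := by simpa using (abs_nonneg _).trans (hC 1 one_pos)
  have hbound : ∀ t, 1 ≤ t → |hf.count t - κ * t| ≤ C * t ^ α :=
    fun t ht => hC t (zero_lt_one.trans_le ht)
  obtain ⟨c, hc⟩ := exists_abs_integral_div_sq_sub_log_le hf.count_mono.measurable hα1 hbound
  refine ⟨-κ - c, C' + (C / α + |κ|) + C / (1 - α), β, (hθα.trans hαβ).le, hβ1, fun y hy => ?_⟩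
  have hy0 : 0 < y := by linarith
  have hint := abs_integral_div_sub_le hf.count_mono.measurable hα0 hbound hy
  have hpow : y ^ α ≤ y ^ β := Real.rpow_le_rpow_of_exponent_le hy hαβ.le
  have hsq : |y * ((∫ t in (1 : ℝ)..y, hf.count t / t ^ 2) - κ * Real.log y - c)| ≤
      C / (1 - α) * y ^ α := by
    rw [abs_mul, abs_of_pos hy0]
    refine (mul_le_mul_of_nonneg_left (hc y hy) hy0.le).trans_eq ?_
    rw [mul_left_comm, Real.rpow_sub_one hy0.ne', mul_div_cancel₀ _ hy0.ne']
  rw [hf.balancedLogSum_eq_sub_integral hy]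
  calc _ = |(hf.count y * Real.log y - κ * y * Real.log y) -
        ((∫ t in (1 : ℝ)..y, hf.count t / t) - κ * y) -
        y * ((∫ t in (1 : ℝ)..y, hf.count t / t ^ 2) - κ * Real.log y - c)| := by congr 1; ring
    _ ≤ C' * y ^ β + (C / α + |κ|) * y ^ α + C / (1 - α) * y ^ α :=
        (abs_sub _ _).trans (add_le_add ((abs_sub _ _).trans (add_le_add (hC' y hy) hint)) hsq)
    _ ≤ C' * y ^ β + (C / α + |κ|) * y ^ β + C / (1 - α) * y ^ β := by gcongr
    _ = (C' + (C / α + |κ|) + C / (1 - α)) * y ^ β := by ring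

-- A suitable multiple of `I(y)` removes the linear term; the Möbius sum of `I` is only `1`.
lemma exists_abs_balancedLogSum_sub_count_le (hstar : StarCond N κ θ) :
    ∃ c K β : ℝ, 0 ≤ β ∧ β < 1 ∧ ∀ y, 1 ≤ y →
      |hstar.normFinite.balancedLogSum y - c * hstar.normFinite.count y| ≤ K * y ^ β := by
  obtain ⟨hκ, hθ0, -, -⟩ := id hstar
  obtain ⟨c, K, β, hθβ, hβ1, hK⟩ := hstar.exists_abs_balancedLogSum_sub_le
  obtain ⟨C, hC⟩ := hstar.exists_abs_count_sub_le hθβ hβ1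
  refine ⟨c / κ, K + |c / κ| * C, β, hθ0.trans hθβ, hβ1, fun y hy => ?_⟩
  calc _ = |(hstar.normFinite.balancedLogSum y - c * y) -
        c / κ * (hstar.normFinite.count y - κ * y)| := by
        congr 1
        field_simp
        ring
    _ ≤ K * y ^ β + |c / κ| * (C * y ^ β) := by
        refine (abs_sub _ _).trans (add_le_add (hK y hy) ?_)
        rw [abs_mul]
        gcongr
        exact hC y (by linarith)
    _ = (K + |c / κ| * C) * y ^ β := by ring

theorem exists_psi_le (hstar : StarCond N κ θ) :
    ∃ C : ℝ, ∀ y, 1 ≤ y → hstar.normFinite.psi y ≤ C * y := by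
  obtain ⟨c, K, β, hβ0, hβ1, hK⟩ := hstar.exists_abs_balancedLogSum_sub_count_le
  obtain ⟨B, -, hB⟩ := hstar.exists_sum_elementsLE_rpow_neg_le hβ0 hβ1
  set hf := hstar.normFinite
  have hK0 : 0 ≤ K := by simpa using (abs_nonneg _).trans (hK 1 le_rfl)
  refine ⟨1 + |c| + K * B, fun y hy => ?_⟩
  have hy0 : 0 < y := by linarith
  have hsplit : hf.psi y = y - 1 + c + ∑ d ∈ hf.elementsLE y, moebiusM d *
      (hf.balancedLogSum (y / Nm N d) - c * hf.count (y / Nm N d)) := by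
    simp only [mul_sub, mul_left_comm _ c, Finset.sum_sub_distrib, ← Finset.mul_sum]
    rw [hf.sum_moebiusM_mul_count hy, hf.psi_eq_sum_moebiusM_mul_balancedLogSum hy]
    ring
  have hterm : ∀ d ∈ hf.elementsLE y, moebiusM d *
      (hf.balancedLogSum (y / Nm N d) - c * hf.count (y / Nm N d)) ≤
        K * y ^ β * (Nm N d : ℝ) ^ (-β) := fun d hd => by
    have hd0 := hf.Nm_pos d
    have hyd : 1 ≤ y / Nm N d := (one_le_div hd0).2 (hf.mem_elementsLE.1 hd)
    refine (le_abs_self _).trans ?_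
    rw [abs_mul]
    refine (mul_le_of_le_one_left (abs_nonneg _) (abs_moebiusM_le_one d)).trans
      ((hK _ hyd).trans_eq ?_)
    rw [Real.div_rpow hy0.le hd0.le, Real.rpow_neg hd0.le]
    ring
  calc hf.psi y ≤ y - 1 + c + K * y ^ β * (B * y ^ (1 - β)) := by
        rw [hsplit]
        gcongr
        refine (Finset.sum_le_sum hterm).trans ?_
        rw [← Finset.mul_sum]
        gcongr
        exact hB y hy0.le
    _ = y - 1 + c + K * B * (y ^ β * y ^ (1 - β)) := by ring
    _ = y - 1 + c + K * B * y := by rw [← Real.rpow_add hy0, add_sub_cancel, Real.rpow_one]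
    _ ≤ (1 + |c| + K * B) * y := by nlinarith [le_abs_self c, abs_nonneg c]

end StarCond

/-! ### Mertens' theorems -/

section Mertens

variable {P : Type*} {N : P → ℕ} {κ θ : ℝ}

lemma sum_Icc_one_pow_le {r : ℝ} (hr0 : 0 ≤ r) (hr : r ≤ 1 / 2) (J : ℕ) :
    ∑ j ∈ Finset.Icc 1 J, r ^ j ≤ r + 2 * r ^ 2 := by
  have hgeom : (∑ j ∈ Finset.Icc 1 J, r ^ j) * (1 - r) = r - r ^ (J + 1) := by
    induction J with
    | zero => simp
    | succ J ih => rw [Finset.sum_Icc_succ_top (by omega), add_mul, ih]; ring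
  have hpow : 0 ≤ r ^ (J + 1) := by positivity
  have hclosed : r ≤ (r + 2 * r ^ 2) * (1 - r) := by
    nlinarith [mul_nonneg hr0 (mul_nonneg hr0 (sub_nonneg.2 hr))]
  exact le_of_mul_le_mul_right (by linarith) (by linarith : 0 < 1 - r)

lemma abs_sum_Icc_log_div_pow_sub_le {q : ℝ} (hq : 2 ≤ q) {J : ℕ} (hJ : 1 ≤ J) :
    |∑ j ∈ Finset.Icc 1 J, Real.log q / q ^ j - Real.log q / q| ≤ 4 * q ^ (-(3 / 2 : ℝ)) := by
  have hq0 : 0 < q := by linarith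
  have hlog : 0 ≤ Real.log q := Real.log_nonneg (by linarith)
  set r : ℝ := q⁻¹ with hr
  have hr0 : 0 ≤ r := by positivity
  have hr2 : r ≤ 1 / 2 := by rw [one_div]; exact inv_anti₀ two_pos hq
  have hfirst : r ≤ ∑ j ∈ Finset.Icc 1 J, r ^ j := by
    simpa only [pow_one] using Finset.single_le_sum (f := fun j => r ^ j)
      (fun j _ => pow_nonneg hr0 j) (Finset.mem_Icc.2 ⟨le_rfl, hJ⟩)
  have hfactor : ∑ j ∈ Finset.Icc 1 J, Real.log q / q ^ j - Real.log q / q =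
      Real.log q * (∑ j ∈ Finset.Icc 1 J, r ^ j - r) := by
    simp only [hr, div_eq_mul_inv, ← inv_pow, ← Finset.mul_sum, ← mul_sub]
  have hlogle : Real.log q ≤ 2 * q ^ (1 / 2 : ℝ) :=
    (Real.log_le_rpow_div hq0.le one_half_pos).trans_eq (by ring)
  have hrpow : q ^ (-(3 / 2) : ℝ) = q ^ (1 / 2 : ℝ) * r ^ 2 := by
    rw [hr, inv_pow, ← Real.rpow_natCast, ← Real.rpow_neg hq0.le, ← Real.rpow_add hq0]
    norm_num
  rw [hfactor, abs_of_nonneg (mul_nonneg hlog (sub_nonneg.2 hfirst))]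
  calc Real.log q * (∑ j ∈ Finset.Icc 1 J, r ^ j - r)
      ≤ 2 * q ^ (1 / 2 : ℝ) * (2 * r ^ 2) := by
        refine mul_le_mul hlogle ?_ (sub_nonneg.2 hfirst) (by positivity)
        linarith [sum_Icc_one_pow_le hr0 hr2 J]
    _ = 4 * q ^ (-(3 / 2) : ℝ) := by rw [hrpow]; ring

namespace NormFinite

lemma single_mem_elementsLE_iff (hf : NormFinite N) {y : ℝ} (hy : 1 ≤ y) (p : P) {j : ℕ}
    (hj : j ≠ 0) :
    Finsupp.single p j ∈ hf.elementsLE y ↔ p ∈ hf.primesLE y ∧ j ≤ Nat.log (N p) ⌊y⌋₊ := by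
  have hy0 : 0 ≤ y := by linarith
  rw [mem_elementsLE, mem_primesLE, Nm_single, Nat.le_log_iff_pow_le (hf.two_le p)
    (Nat.floor_pos.2 hy).ne', ← Nat.le_floor_iff hy0, ← Nat.le_floor_iff hy0, iff_and_self]
  exact fun h => (Nat.le_self_pow hj (N p)).trans h

lemma abs_sum_vonMangoldtM_div_sub_le (hf : NormFinite N) {y : ℝ} (hy : 1 ≤ y) :
    |∑ d ∈ hf.elementsLE y, vonMangoldtM N d / Nm N d -
      ∑ p ∈ hf.primesLE y, Real.log (N p) / N p| ≤
        4 * ∑ p ∈ hf.primesLE y, (N p : ℝ) ^ (-(3 / 2 : ℝ)) := by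
  have hsum := sum_vonMangoldtM_mul (N := N) (fun p j => hf.single_mem_elementsLE_iff hy p)
    fun d => 1 / (Nm N d : ℝ)
  simp only [mul_one_div, Nm_single, Nat.cast_pow] at hsum
  rw [hsum, ← Finset.sum_sub_distrib, Finset.mul_sum]
  refine (Finset.abs_sum_le_sum_abs _ _).trans (Finset.sum_le_sum fun p hp => ?_)
  refine abs_sum_Icc_log_div_pow_sub_le (hf.two_le_cast p) ?_
  rw [Nat.le_log_iff_pow_le (hf.two_le p) (Nat.floor_pos.2 hy).ne', pow_one]
  exact Nat.le_floor (hf.mem_primesLE.1 hp)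

end NormFinite

namespace StarCond

lemma exists_sum_vonMangoldtM_mul_rpow_neg_le (hstar : StarCond N κ θ) {s : ℝ} (hs : 0 ≤ s)
    (hs1 : s < 1) :
    ∃ C : ℝ, ∀ y, 1 ≤ y →
      ∑ d ∈ hstar.normFinite.elementsLE y, vonMangoldtM N d * (Nm N d : ℝ) ^ (-s) ≤
        C * y ^ (1 - s) := by
  obtain ⟨C, hC⟩ := hstar.exists_psi_le
  set hf := hstar.normFinite
  have hpsi : 0 ≤ hf.psi 1 := Finset.sum_nonneg fun d _ => vonMangoldtM_nonneg d
  have hC0 : 0 ≤ C := by simpa using hpsi.trans (hC 1 le_rfl)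
  refine ⟨C / (1 - s), fun y hy => ?_⟩
  refine (sum_mul_rpow_neg_le (C := C) (ν := fun d => (Nm N d : ℝ)) hs hs1.ne hy
    (fun d hd => ⟨hf.one_le_Nm d, hf.mem_elementsLE.1 hd⟩) fun t ht => ?_).trans ?_
  · rw [hf.filter_elementsLE ht.2]
    exact hC t ht.1
  · have : 0 < 1 - s := sub_pos.2 hs1
    rw [div_mul_eq_mul_div, mul_div_assoc]
    gcongr
    linarith

lemma exists_abs_mul_sum_vonMangoldtM_div_sub_le (hstar : StarCond N κ θ) :
    ∃ K : ℝ, ∀ y, 1 ≤ y →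
      |κ * y * ∑ d ∈ hstar.normFinite.elementsLE y, vonMangoldtM N d / Nm N d -
        ∑ m ∈ hstar.normFinite.elementsLE y, Real.log (Nm N m)| ≤ K * y := by
  obtain ⟨-, hθ0, hθ1, -⟩ := id hstar
  obtain ⟨C, hC⟩ := hstar.exists_abs_count_sub_le le_rfl hθ1
  obtain ⟨B, hB⟩ := hstar.exists_sum_vonMangoldtM_mul_rpow_neg_le hθ0 hθ1
  set hf := hstar.normFinite
  have hC0 : 0 ≤ C := by simpa using (abs_nonneg _).trans (hC 1 one_pos)
  refine ⟨C * B, fun y hy => ?_⟩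
  have hy0 : 0 < y := by linarith
  have hterm : ∀ d ∈ hf.elementsLE y, |κ * y * (vonMangoldtM N d / Nm N d) -
      vonMangoldtM N d * hf.count (y / Nm N d)| ≤
        C * y ^ θ * (vonMangoldtM N d * (Nm N d : ℝ) ^ (-θ)) := fun d _ => by
    have hd0 := hf.Nm_pos d
    have hΛ := vonMangoldtM_nonneg (N := N) d
    rw [show κ * y * (vonMangoldtM N d / Nm N d) - vonMangoldtM N d * hf.count (y / Nm N d) =
      -(vonMangoldtM N d * (hf.count (y / Nm N d) - κ * (y / Nm N d))) by ring, abs_neg, abs_mul,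
      abs_of_nonneg hΛ]
    refine (mul_le_mul_of_nonneg_left (hC _ (div_pos hy0 hd0)) hΛ).trans_eq ?_
    rw [Real.div_rpow hy0.le hd0.le, Real.rpow_neg hd0.le]
    ring
  rw [← hf.sum_vonMangoldtM_mul_count, Finset.mul_sum, ← Finset.sum_sub_distrib]
  calc _ ≤ C * y ^ θ * (B * y ^ (1 - θ)) := by
        refine (Finset.abs_sum_le_sum_abs _ _).trans ((Finset.sum_le_sum hterm).trans ?_)
        rw [← Finset.mul_sum]
        gcongr
        exact hB y hy
    _ = C * B * (y ^ θ * y ^ (1 - θ)) := by ring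
    _ = C * B * y := by rw [← Real.rpow_add hy0, add_sub_cancel, Real.rpow_one]

lemma exists_abs_sum_vonMangoldtM_div_sub_log_le (hstar : StarCond N κ θ) :
    ∃ K : ℝ, ∀ y, 1 ≤ y →
      |∑ d ∈ hstar.normFinite.elementsLE y, vonMangoldtM N d / Nm N d - Real.log y| ≤ K := by
  have hκ : 0 < κ := hstar.1
  obtain ⟨C, hC⟩ := hstar.exists_abs_mul_sum_vonMangoldtM_div_sub_le
  obtain ⟨K, hK⟩ := hstar.exists_abs_sum_log_Nm_sub_le
  refine ⟨(C + K) / κ, fun y hy => ?_⟩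
  have hy0 : 0 < y := by linarith
  set S := ∑ d ∈ hstar.normFinite.elementsLE y, vonMangoldtM N d / Nm N d
  have hκy : 0 < κ * y := by positivity
  rw [le_div_iff₀ hκ, ← mul_le_mul_iff_left₀ hy0]
  calc |S - Real.log y| * κ * y = |κ * y * S - κ * y * Real.log y| := by
        rw [← mul_sub, abs_mul, abs_of_pos hκy]
        ring
    _ ≤ C * y + K * y := (abs_sub_le _ _ _).trans (add_le_add (hC y hy) (hK y hy))
    _ = (C + K) * y := by ring

theorem exists_abs_sum_log_div_sub_log_le (hstar : StarCond N κ θ) :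
    ∃ K : ℝ, ∀ y, 1 ≤ y →
      |∑ p ∈ hstar.normFinite.primesLE y, Real.log (N p) / N p - Real.log y| ≤ K := by
  obtain ⟨K, hK⟩ := hstar.exists_abs_sum_vonMangoldtM_div_sub_log_le
  have hsum := hstar.summable_prime_rpow_neg (s := 3 / 2) (by norm_num)
  refine ⟨4 * ∑' p : P, (N p : ℝ) ^ (-(3 / 2 : ℝ)) + K, fun y hy => ?_⟩
  have hpowers := hstar.normFinite.abs_sum_vonMangoldtM_div_sub_le hy
  rw [abs_sub_comm] at hpowers
  refine (abs_sub_le _ _ _).trans (add_le_add (hpowers.trans ?_) (hK y hy))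
  gcongr
  exact hsum.sum_le_tsum _ fun p _ => by positivity

end StarCond

end Mertens

section PrimeSums

open MeasureTheory

lemma hasDerivAt_inv_log {t : ℝ} (ht : 1 < t) :
    HasDerivAt (fun t => (Real.log t)⁻¹) (-(t * Real.log t ^ 2)⁻¹) t := by
  have hlog := (Real.log_pos ht).ne'
  convert! (Real.hasDerivAt_log (by linarith)).inv hlog using 1
  rw [mul_inv]
  ring

lemma continuousOn_log_Icc {y : ℝ} (hy : 1 < y) (z : ℝ) : ContinuousOn Real.log (Set.Icc y z) :=
  Real.continuousOn_log.mono fun _ ht => (zero_lt_one.trans (hy.trans_le ht.1)).ne'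

lemma continuousOn_inv_mul_log_sq {y : ℝ} (hy : 1 < y) (z : ℝ) :
    ContinuousOn (fun t => (t * Real.log t ^ 2)⁻¹) (Set.Icc y z) := by
  refine (continuousOn_id.mul ((continuousOn_log_Icc hy z).pow 2)).inv₀ fun t ht => ?_
  have ht1 : 1 < t := hy.trans_le ht.1
  exact mul_ne_zero (by linarith : t ≠ 0) (pow_ne_zero 2 (Real.log_pos ht1).ne')

lemma integral_linear_log_div_mul_log_sq (a b : ℝ) {y z : ℝ} (hy : 1 < y) (hyz : y ≤ z) :
    ∫ t in y..z, (a * Real.log t + b) * (t * Real.log t ^ 2)⁻¹ =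
      a * (Real.log (Real.log z) - Real.log (Real.log y)) +
        b * ((Real.log y)⁻¹ - (Real.log z)⁻¹) := by
  have hderiv : ∀ t ∈ Set.uIcc y z,
      HasDerivAt (fun t => a * Real.log (Real.log t) - b * (Real.log t)⁻¹)
        ((a * Real.log t + b) * (t * Real.log t ^ 2)⁻¹) t := fun t ht => by
    rw [Set.uIcc_of_le hyz] at ht
    have ht1 : 1 < t := hy.trans_le ht.1
    have hlog := (Real.log_pos ht1).ne'
    have hloglog := (Real.hasDerivAt_log (by linarith : t ≠ 0)).log hlog
    convert! (hloglog.const_mul a).sub ((hasDerivAt_inv_log ht1).const_mul b) using 1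
    field_simp
    ring
  have hcont : ContinuousOn (fun t => (a * Real.log t + b) * (t * Real.log t ^ 2)⁻¹)
      (Set.uIcc y z) := by
    rw [Set.uIcc_of_le hyz]
    exact (((continuousOn_log_Icc hy z).const_mul a).add_const b).mul
      (continuousOn_inv_mul_log_sq hy z)
  rw [intervalIntegral.integral_eq_sub_of_hasDerivAt hderiv hcont.intervalIntegrable]
  ring

lemma sum_div_log_le {ι : Type*} {s : Finset ι} {ν c : ι → ℝ} {a b y z : ℝ} (hy : 1 < y)
    (hyz : y ≤ z) (hν : ∀ i ∈ s, ν i ∈ Set.Icc y z)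
    (hc : ∀ t ∈ Set.Icc y z, ∑ i ∈ s with ν i ≤ t, c i ≤ a * Real.log t + b) :
    ∑ i ∈ s, c i / Real.log (ν i) ≤
      a * (Real.log (Real.log z) - Real.log (Real.log y) + 1) + b / Real.log y := by
  have hlogz : 0 < Real.log z := Real.log_pos (hy.trans_le hyz)
  have hcont := continuousOn_inv_mul_log_sq hy z
  have hall : ∑ i ∈ s, c i ≤ a * Real.log z + b := by
    simpa only [Finset.filter_true_of_mem fun i hi => (hν i hi).2] using hc z ⟨hyz, le_rfl⟩
  have hlog := continuousOn_log_Icc hy z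
  have hintegral : ∫ t in y..z, (∑ i ∈ s with ν i ≤ t, c i) * (t * Real.log t ^ 2)⁻¹ ≤
      ∫ t in y..z, (a * Real.log t + b) * (t * Real.log t ^ 2)⁻¹ := by
    refine intervalIntegral.integral_mono_on hyz (intervalIntegrable_sum_filter_mul hyz hcont)
      ((((hlog.const_mul a).add_const b).mul hcont).intervalIntegrable_of_Icc hyz) fun t ht => ?_
    have ht0 : 0 < t := by linarith [ht.1]
    exact mul_le_mul_of_nonneg_right (hc t ht) (by positivity)
  simp only [div_eq_mul_inv]
  rw [sum_mul_eq_sub_integral_sum_filter hyz hν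
    (fun t ht => hasDerivAt_inv_log (hy.trans_le ht.1)) hcont.neg]
  simp only [mul_neg, intervalIntegral.integral_neg, sub_neg_eq_add]
  rw [integral_linear_log_div_mul_log_sq a b hy hyz] at hintegral
  calc _ ≤ (a * Real.log z + b) * (Real.log z)⁻¹ +
        (a * (Real.log (Real.log z) - Real.log (Real.log y)) +
          b * ((Real.log y)⁻¹ - (Real.log z)⁻¹)) := by gcongr
    _ = _ := by field_simp; ring

lemma abs_sum_div_log_sub_le {ι : Type*} {s : Finset ι} {ν c : ι → ℝ} {B y z : ℝ} (hy : 1 < y)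
    (hyz : y ≤ z) (hν : ∀ i ∈ s, ν i ∈ Set.Icc y z)
    (hc : ∀ t ∈ Set.Icc y z, |∑ i ∈ s with ν i ≤ t, c i - (Real.log t - Real.log y)| ≤ B) :
    |∑ i ∈ s, c i / Real.log (ν i) - (Real.log (Real.log z) - Real.log (Real.log y))| ≤
      B / Real.log y := by
  have hlogy : Real.log y ≠ 0 := (Real.log_pos hy).ne'
  have hupper := sum_div_log_le (a := 1) (b := B - Real.log y) hy hyz hν fun t ht => by
    linarith [(abs_le.1 (hc t ht)).2]
  have hlower := sum_div_log_le (c := -c) (a := -1) (b := B + Real.log y) hy hyz hν fun t ht => by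
    simp only [Pi.neg_apply, Finset.sum_neg_distrib]
    linarith [(abs_le.1 (hc t ht)).1]
  simp only [Pi.neg_apply, neg_div, Finset.sum_neg_distrib] at hlower
  rw [sub_div, div_self hlogy] at hupper
  rw [add_div, div_self hlogy] at hlower
  rw [abs_le]
  constructor <;> linarith

variable {P : Type*} {N : P → ℕ} {κ θ : ℝ}

namespace StarCond

lemma exists_abs_sum_primesLE_one_div_sub_le (hstar : StarCond N κ θ) :
    ∃ K : ℝ, ∀ y z, 1 < y → y ≤ z →
      |(∑ p ∈ hstar.normFinite.primesLE z, 1 / (N p : ℝ) - Real.log (Real.log z)) -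
        (∑ p ∈ hstar.normFinite.primesLE y, 1 / (N p : ℝ) - Real.log (Real.log y))| ≤
          K / Real.log y := by
  obtain ⟨K, hK⟩ := hstar.exists_abs_sum_log_div_sub_log_le
  set hf := hstar.normFinite
  refine ⟨K + K, fun y z hy hyz => ?_⟩
  have hsplit : ∀ (g : P → ℝ) {t : ℝ}, y ≤ t → ∑ p ∈ hf.primesLE t with y < N p, g p =
      ∑ p ∈ hf.primesLE t, g p - ∑ p ∈ hf.primesLE y, g p := fun g t hyt => by
    rw [← hf.filter_primesLE hyt, ← Finset.sum_filter_add_sum_filter_not (hf.primesLE t)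
      (fun p => (N p : ℝ) ≤ y), add_sub_cancel_left]
    simp only [not_le]
  have hlogs : ∀ t ∈ Set.Icc y z, |∑ p ∈ {p ∈ hf.primesLE z | y < N p} with (N p : ℝ) ≤ t,
      Real.log (N p) / N p - (Real.log t - Real.log y)| ≤ K + K := fun t ht => by
    rw [Finset.filter_comm, hf.filter_primesLE ht.2, hsplit _ ht.1,
      show ∀ u v w x : ℝ, u - v - (w - x) = (u - w) - (v - x) by intros; ring]
    exact (abs_sub _ _).trans (add_le_add (hK t (by linarith [ht.1])) (hK y hy.le))
  have hinterval := abs_sum_div_log_sub_le (ν := fun p => (N p : ℝ)) hy hyz (fun p hp => by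
    obtain ⟨hpz, hyp⟩ := Finset.mem_filter.1 hp
    exact ⟨hyp.le, hf.mem_primesLE.1 hpz⟩) hlogs
  have hcancel : ∀ p, Real.log (N p) / N p / Real.log (N p) = 1 / (N p : ℝ) := fun p => by
    have := (Real.log_pos (by linarith [hf.two_le_cast p] : (1 : ℝ) < N p)).ne'
    field_simp
  simp only [hcancel] at hinterval
  rw [hsplit _ hyz] at hinterval
  convert hinterval using 2
  ring

theorem exists_abs_sum_primesLE_one_div_sub_loglog_le (hstar : StarCond N κ θ) {A : ℝ}
    (hA : IsMertens N A) :
    ∃ K : ℝ, ∀ y, 1 < y →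
      |∑ p ∈ hstar.normFinite.primesLE y, 1 / (N p : ℝ) - Real.log (Real.log y) - A| ≤
        K / Real.log y := by
  obtain ⟨K, hK⟩ := hstar.exists_abs_sum_primesLE_one_div_sub_le
  refine ⟨K, fun y hy => ?_⟩
  have hlim : Tendsto (fun z => ∑ p ∈ hstar.normFinite.primesLE z, 1 / (N p : ℝ) -
      Real.log (Real.log z)) atTop (𝓝 A) := by
    simpa only [IsMertens, NormFinite.primesLE,
      finsum_mem_eq_finite_toFinset_sum _ (hstar.normFinite.finite_primes _)] using hA
  rw [abs_sub_comm]
  refine le_of_tendsto (hlim.sub_const _).abs ?_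
  filter_upwards [eventually_ge_atTop y] with z hz using hK y z hy hz

lemma exists_sum_primesLE_log_mul_rpow_neg_le (hstar : StarCond N κ θ) {s : ℝ} (hs : 0 ≤ s)
    (hs1 : s < 1) :
    ∃ C : ℝ, ∀ y, 1 ≤ y →
      ∑ p ∈ hstar.normFinite.primesLE y, Real.log (N p) * (N p : ℝ) ^ (-s) ≤ C * y ^ (1 - s) := by
  obtain ⟨C, hC⟩ := hstar.exists_sum_vonMangoldtM_mul_rpow_neg_le hs hs1
  refine ⟨C, fun y hy => le_trans ?_ (hC y hy)⟩
  have hprimes := hstar.normFinite.sum_primesLE_le_sum_elementsLE y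
    (g := fun d => vonMangoldtM N d * (Nm N d : ℝ) ^ (-s)) fun d =>
      mul_nonneg (vonMangoldtM_nonneg d) (by positivity)
  simpa only [vonMangoldtM_single _ one_ne_zero, Nm_single, pow_one] using hprimes

theorem exists_sum_primesLE_rpow_neg_le (hstar : StarCond N κ θ) {s : ℝ} (hs : 0 ≤ s)
    (hs1 : s < 1) :
    ∃ C : ℝ, ∀ y, 1 < y →
      ∑ p ∈ hstar.normFinite.primesLE y, (N p : ℝ) ^ (-s) ≤ C * (y ^ (1 - s) / Real.log y) := by
  obtain ⟨C₁, hC₁, hsmall⟩ := hstar.exists_sum_elementsLE_rpow_neg_le hs hs1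
  obtain ⟨C₂, hlarge⟩ := hstar.exists_sum_primesLE_log_mul_rpow_neg_le hs hs1
  set hf := hstar.normFinite
  set δ := (1 - s) / 2 with hδ
  have hδ0 : 0 < δ := by rw [hδ]; linarith
  refine ⟨C₁ / δ + 2 * C₂, fun y hy => ?_⟩
  have hy0 : 0 < y := by linarith
  have hlog : 0 < Real.log y := Real.log_pos hy
  have hsqrt : ∑ p ∈ hf.primesLE (y ^ (1 / 2 : ℝ)), (N p : ℝ) ^ (-s) ≤ C₁ * y ^ δ := by
    have hprimes := hf.sum_primesLE_le_sum_elementsLE (y ^ (1 / 2 : ℝ))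
      (g := fun d => (Nm N d : ℝ) ^ (-s)) fun d => by positivity
    simp only [Nm_single, pow_one] at hprimes
    refine hprimes.trans ((hsmall _ (by positivity)).trans_eq ?_)
    rw [← Real.rpow_mul hy0.le, hδ, one_div_mul_eq_div]
  have hsplit : ∀ p ∈ hf.primesLE y, (N p : ℝ) ^ (-s) * Real.log y ≤
      (if (N p : ℝ) ≤ y ^ (1 / 2 : ℝ) then (N p : ℝ) ^ (-s) else 0) * Real.log y +
        2 * (Real.log (N p) * (N p : ℝ) ^ (-s)) := fun p _ => by
    have hp : 0 ≤ (N p : ℝ) ^ (-s) := by positivity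
    split_ifs with hle
    · linarith [mul_nonneg (Real.log_natCast_nonneg (N p)) hp]
    · have hlogp := Real.log_le_log (by positivity) (not_le.1 hle).le
      rw [Real.log_rpow hy0] at hlogp
      linarith [mul_le_mul_of_nonneg_right hlogp hp]
  have hsum := Finset.sum_le_sum hsplit
  rw [← Finset.sum_mul, Finset.sum_add_distrib, ← Finset.sum_mul, ← Finset.sum_filter,
    hf.filter_primesLE (Real.rpow_le_self_of_one_le hy.le (by norm_num)), ← Finset.mul_sum] at hsum
  rw [← mul_div_assoc, le_div_iff₀ hlog]
  calc _ ≤ C₁ * y ^ δ * (y ^ δ / δ) + 2 * (C₂ * y ^ (1 - s)) := by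
        refine hsum.trans (add_le_add ?_ (by linarith [hlarge y hy.le]))
        exact mul_le_mul hsqrt (Real.log_le_rpow_div hy0.le hδ0) hlog.le (by positivity)
    _ = C₁ / δ * (y ^ δ * y ^ δ) + 2 * C₂ * y ^ (1 - s) := by ring
    _ = _ := by rw [← Real.rpow_add hy0, hδ, add_halves, add_mul]

end StarCond

end PrimeSums

/-! ### Euler products -/

section EulerProduct

variable {P : Type*} {g : P → ℕ → ℝ} {T : P → Finset ℕ}

lemma sum_finsupp_prod_eq_prod_sum (hg : ∀ p, g p 0 = 1) (S : Finset P) (T : P → Finset ℕ) :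
    ∑ b ∈ S.finsupp T, b.prod g = ∏ p ∈ S, ∑ j ∈ T p, g p j := by
  rw [Finset.prod_sum, Finset.finsupp, Finset.sum_map]
  refine Finset.sum_congr rfl fun f _ => ?_
  rw [Function.Embedding.coeFn_mk, Finsupp.prod_of_support_subset _
    (Finsupp.support_indicator_subset _ _) _ fun p _ => hg p, ← Finset.prod_attach]
  exact Finset.prod_congr rfl fun p _ => by rw [Finsupp.indicator_of_mem p.2]

lemma mem_finsupp_iff_of_zero_mem (hT : ∀ p, 0 ∈ T p) {S : Finset P} {b : P →₀ ℕ} :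
    b ∈ S.finsupp T ↔ b.support ⊆ S ∧ ∀ p, b p ∈ T p := by
  rw [Finset.mem_finsupp_iff]
  refine and_congr_right fun hb => ⟨fun hmem p => ?_, fun hmem p _ => hmem p⟩
  by_cases hp : p ∈ S
  · exact hmem p hp
  · rw [Finsupp.notMem_support_iff.1 fun hpb => hp (hb hpb)]
    exact hT p

theorem hasSum_finsupp_prod (hg : ∀ p j, 0 ≤ g p j) (hg0 : ∀ p, g p 0 = 1)
    (hT : ∀ p, ∀ j ∉ T p, g p j = 0) (hmul : Multipliable fun p => ∑ j ∈ T p, g p j) :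
    HasSum (fun b : P →₀ ℕ => b.prod g) (∏' p, ∑ j ∈ T p, g p j) := by
  have hprod : ∀ b : P →₀ ℕ, 0 ≤ b.prod g := fun b => Finset.prod_nonneg fun p _ => hg p (b p)
  have hT0 : ∀ p, 0 ∈ T p := fun p => by_contra fun h => one_ne_zero ((hg0 p).symm.trans (hT p 0 h))
  have hlim : Tendsto (fun S : Finset P => ∑ b ∈ S.finsupp T, b.prod g) atTop
      (𝓝 (∏' p, ∑ j ∈ T p, g p j)) := by
    simp only [sum_finsupp_prod_eq_prod_sum hg0]
    exact hmul.hasProd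
  have hmono : Monotone fun S : Finset P => ∑ b ∈ S.finsupp T, b.prod g := fun S S' hS =>
    Finset.sum_le_sum_of_subset_of_nonneg (fun b hb => by
      rw [mem_finsupp_iff_of_zero_mem hT0] at hb ⊢
      exact ⟨hb.1.trans hS, hb.2⟩) fun b _ _ => hprod b
  refine hasSum_of_isLUB_of_nonneg _ hprod ⟨?_, fun u hu => ?_⟩
  · rintro _ ⟨U, rfl⟩
    refine le_trans ?_ (hmono.ge_of_tendsto hlim (U.biUnion Finsupp.support))
    dsimp only
    rw [← Finset.sum_filter_ne_zero]
    refine Finset.sum_le_sum_of_subset_of_nonneg (fun b hb => ?_) fun b _ _ => hprod b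
    obtain ⟨hbU, hb⟩ := Finset.mem_filter.1 hb
    refine (mem_finsupp_iff_of_zero_mem hT0).2 ⟨Finset.subset_biUnion_of_mem _ hbU, fun p => ?_⟩
    by_cases hp : p ∈ b.support
    · exact by_contra fun hnot => Finset.prod_ne_zero_iff.1 hb p hp (hT p _ hnot)
    · rw [Finsupp.notMem_support_iff.1 hp]
      exact hT0 p
  · exact le_of_tendsto hlim (Eventually.of_forall fun S => hu ⟨_, rfl⟩)

lemma rpow_Nm_eq_prod (N : P → ℕ) (s : ℝ) (b : P →₀ ℕ) :
    (Nm N b : ℝ) ^ s = b.prod fun p j => ((N p : ℝ) ^ j) ^ s := by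
  simp only [Nm, Finsupp.prod, Nat.cast_prod, Nat.cast_pow]
  exact (Real.finsetProd_rpow _ _ (fun p _ => by positivity) s).symm

theorem hasSum_ite_rpow_Nm (N : P → ℕ) (s : ℝ) (hT : ∀ p, 0 ∈ T p)
    (hmul : Multipliable fun p => ∑ j ∈ T p, ((N p : ℝ) ^ j) ^ s) :
    HasSum (fun b : P →₀ ℕ => if ∀ p, b p ∈ T p then (Nm N b : ℝ) ^ s else 0)
      (∏' p, ∑ j ∈ T p, ((N p : ℝ) ^ j) ^ s) := by
  set g : P → ℕ → ℝ := fun p j => if j ∈ T p then ((N p : ℝ) ^ j) ^ s else 0 with hg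
  have hsum : ∀ p, ∑ j ∈ T p, ((N p : ℝ) ^ j) ^ s = ∑ j ∈ T p, g p j := fun p =>
    Finset.sum_congr rfl fun j hj => (if_pos hj).symm
  have hprod : ∀ b : P →₀ ℕ, (if ∀ p, b p ∈ T p then (Nm N b : ℝ) ^ s else 0) = b.prod g := by
    intro b
    split_ifs with hb
    · rw [rpow_Nm_eq_prod]
      exact Finset.prod_congr rfl fun p _ => (if_pos (hb p)).symm
    · obtain ⟨p, hp⟩ := not_forall.1 hb
      refine (Finset.prod_eq_zero (i := p) ?_ (if_neg hp)).symm
      exact Finsupp.mem_support_iff.2 fun h0 => hp (h0 ▸ hT p)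
  simp only [hsum, hprod] at hmul ⊢
  refine hasSum_finsupp_prod (fun p j => ?_) (fun p => ?_) (fun p j hj => if_neg hj) hmul
  · rw [hg]
    positivity
  · simp only [hg, if_pos (hT p), pow_zero, Real.one_rpow]

end EulerProduct

section Residue

variable {P : Type*} {N : P → ℕ} {κ θ : ℝ} {h : ℕ} {s : ℝ}

/-- An `h`-residue: every nonzero multiplicity lies strictly between `h` and `2 * h`. Every
`h`-full element is uniquely of the form `h • a + b` with `b` an `h`-residue. -/
def IsResidue (h : ℕ) (b : P →₀ ℕ) : Prop :=
  ∀ p, b p = 0 ∨ h < b p ∧ b p < 2 * h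

/-- The sum of `(q ^ j) ^ (-s)` over the nonzero multiplicities `j` allowed in an `h`-residue, so
that `1 + residueFactor h s (N p)` is the Euler factor of `residueZeta N h s` at `p`. -/
def residueFactor (h : ℕ) (s q : ℝ) : ℝ :=
  ∑ j ∈ Finset.Ioo h (2 * h), (q ^ j) ^ (-s)

/-- The Dirichlet series `∑ (Nm N b) ^ (-s)` over the `h`-residues `b`, as an Euler product. -/
def residueZeta (N : P → ℕ) (h : ℕ) (s : ℝ) : ℝ :=
  ∏' p, (1 + residueFactor h s (N p))

lemma residueFactor_nonneg (h : ℕ) (s : ℝ) {q : ℝ} (hq : 0 ≤ q) : 0 ≤ residueFactor h s q :=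
  Finset.sum_nonneg fun _ _ => by positivity

lemma residueFactor_le (hs : 0 ≤ s) {q : ℝ} (hq : 1 ≤ q) :
    residueFactor h s q ≤ h * q ^ (-((h + 1) * s)) := by
  have hterm : ∀ j ∈ Finset.Ioo h (2 * h), (q ^ j) ^ (-s) ≤ q ^ (-((h + 1) * s)) := fun j hj => by
    rw [← Real.rpow_natCast_mul (by linarith), mul_neg]
    have hj : (h : ℝ) + 1 ≤ j := by exact_mod_cast (Finset.mem_Ioo.1 hj).1
    gcongr
  refine (Finset.sum_le_card_nsmul _ _ _ hterm).trans ?_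
  rw [nsmul_eq_mul]
  gcongr
  rw [Nat.card_Ioo]
  omega

lemma one_sub_div_one_add_residueFactor_le (hh : h ≠ 0) {α : ℝ} (hα : 0 ≤ α) {q : ℝ} (hq : 1 ≤ q) :
    1 - (1 - q ^ (-α)) / (1 + residueFactor h (α / h) q) ≤ (h + 1) * q ^ (-α) := by
  have hh0 : (0 : ℝ) < h := by positivity
  have hF0 := residueFactor_nonneg h (α / h) (zero_le_one.trans hq)
  have hF : residueFactor h (α / h) q ≤ h * q ^ (-α) := by
    have hexp : α ≤ (h + 1) * (α / h) := by
      rw [add_mul, one_mul, mul_div_cancel₀ _ hh0.ne']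
      exact le_add_of_nonneg_right (by positivity)
    exact (residueFactor_le (by positivity) hq).trans (by gcongr)
  have : 0 ≤ q ^ (-α) := by positivity
  calc 1 - (1 - q ^ (-α)) / (1 + residueFactor h (α / h) q)
      = (residueFactor h (α / h) q + q ^ (-α)) / (1 + residueFactor h (α / h) q) := by
        field_simp
        ring
    _ ≤ residueFactor h (α / h) q + q ^ (-α) :=
        div_le_self (by positivity) (le_add_of_nonneg_right hF0)
    _ ≤ (h + 1) * q ^ (-α) := by linarith

lemma sum_insert_zero_Ioo_rpow_neg (h : ℕ) (s q : ℝ) :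
    ∑ j ∈ insert 0 (Finset.Ioo h (2 * h)), (q ^ j) ^ (-s) = 1 + residueFactor h s q := by
  rw [Finset.sum_insert fun hmem => Nat.not_lt_zero _ (Finset.mem_Ioo.1 hmem).1, pow_zero,
    Real.one_rpow, residueFactor]

lemma isResidue_iff_forall_mem {b : P →₀ ℕ} :
    IsResidue h b ↔ ∀ p, b p ∈ insert 0 (Finset.Ioo h (2 * h)) := by
  simp only [IsResidue, Finset.mem_insert, Finset.mem_Ioo]

lemma isResidue_and_eq_zero_iff_forall_mem {b : P →₀ ℕ} {p : P} :
    IsResidue h b ∧ b p = 0 ↔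
      ∀ q, b q ∈ Function.update (fun _ => insert 0 (Finset.Ioo h (2 * h))) p {0} q := by
  rw [isResidue_iff_forall_mem]
  refine ⟨fun hb q => ?_, fun hb => ?_⟩
  · rcases eq_or_ne q p with rfl | hqp
    · rw [Function.update_self, hb.2]
      exact Finset.mem_singleton_self 0
    · rw [Function.update_of_ne hqp]
      exact hb.1 q
  · have hbp : b p = 0 := Finset.mem_singleton.1 (by simpa only [Function.update_self] using hb p)
    refine ⟨fun q => ?_, hbp⟩
    rcases eq_or_ne q p with rfl | hqp
    · rw [hbp]
      exact Finset.mem_insert_self _ _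
    · simpa only [Function.update_of_ne hqp] using hb q

/-- The proportion of the elements `a` for which `p` divides `a + b`. -/
def divisorWeight (N : P → ℕ) (p : P) (b : P →₀ ℕ) : ℝ := if b p = 0 then (N p : ℝ)⁻¹ else 1

namespace StarCond

lemma summable_residueFactor (hstar : StarCond N κ θ) (hs : 0 ≤ s) (hs1 : 1 < (h + 1) * s) :
    Summable fun p => residueFactor h s (N p) :=
  Summable.of_nonneg_of_le (fun _ => residueFactor_nonneg h s (Nat.cast_nonneg _))
    (fun p => residueFactor_le hs (by linarith [hstar.normFinite.two_le_cast p]))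
    ((hstar.summable_prime_rpow_neg hs1).mul_left _)

lemma multipliable_residueFactor (hstar : StarCond N κ θ) (hs : 0 ≤ s) (hs1 : 1 < (h + 1) * s) :
    Multipliable fun p => 1 + residueFactor h s (N p) :=
  Real.multipliable_one_add_of_summable (hstar.summable_residueFactor hs hs1)

theorem hasSum_isResidue (hstar : StarCond N κ θ) (hs : 0 ≤ s) (hs1 : 1 < (h + 1) * s) :
    HasSum (fun b : P →₀ ℕ => if IsResidue h b then (Nm N b : ℝ) ^ (-s) else 0)
      (residueZeta N h s) := by
  have hsum := hasSum_ite_rpow_Nm N (-s) (fun _ => Finset.mem_insert_self 0 (Finset.Ioo h (2 * h)))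
    (by simpa only [sum_insert_zero_Ioo_rpow_neg] using hstar.multipliable_residueFactor hs hs1)
  simpa only [residueZeta, sum_insert_zero_Ioo_rpow_neg, ← isResidue_iff_forall_mem] using hsum

theorem hasSum_isResidue_coprime (hstar : StarCond N κ θ) (hs : 0 ≤ s) (hs1 : 1 < (h + 1) * s)
    (p : P) :
    HasSum (fun b : P →₀ ℕ => if IsResidue h b ∧ b p = 0 then (Nm N b : ℝ) ^ (-s) else 0)
      (residueZeta N h s / (1 + residueFactor h s (N p))) := by
  set T : P → Finset ℕ := Function.update (fun _ => insert 0 (Finset.Ioo h (2 * h))) p {0} with hT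
  have hfactor : (fun q => ∑ j ∈ T q, ((N q : ℝ) ^ j) ^ (-s)) =
      Function.update (fun q => 1 + residueFactor h s (N q)) p 1 := by
    funext q
    rcases eq_or_ne q p with rfl | hqp
    · simp only [hT, Function.update_self, Finset.sum_singleton, pow_zero, Real.one_rpow]
    · simp only [hT, Function.update_of_ne hqp, sum_insert_zero_Ioo_rpow_neg]
  have hmul : Multipliable (Function.update (fun q => 1 + residueFactor h s (N q)) p 1) := by
    have hsummable := (hstar.summable_residueFactor hs hs1).update p 0
    refine (Real.multipliable_one_add_of_summable hsummable).congr fun q => ?_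
    rcases eq_or_ne q p with rfl | hqp
    · simp only [Function.update_self, add_zero]
    · simp only [Function.update_of_ne hqp]
  have hzeta : residueZeta N h s / (1 + residueFactor h s (N p)) =
      ∏' q, Function.update (fun q => 1 + residueFactor h s (N q)) p 1 q := by
    have hpos : 0 < 1 + residueFactor h s (N p) :=
      add_pos_of_pos_of_nonneg one_pos (residueFactor_nonneg h s (Nat.cast_nonneg _))
    rw [div_eq_iff hpos.ne', mul_comm, residueZeta, Multipliable.tprod_eq_mul_tprod_ite' p hmul]
    simp only [Function.update_apply]
  have hsum := hasSum_ite_rpow_Nm N (-s) (T := T)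
    (fun q => by rw [hT, Function.update_apply]; split_ifs <;> simp) (hfactor ▸ hmul)
  rw [hfactor, ← hzeta] at hsum
  simpa only [hT, ← isResidue_and_eq_zero_iff_forall_mem] using hsum

theorem hasSum_isResidue_divisorWeight (hstar : StarCond N κ θ) (hs : 0 ≤ s)
    (hs1 : 1 < (h + 1) * s) (α : ℝ) (p : P) :
    HasSum (fun b : P →₀ ℕ =>
        if IsResidue h b then divisorWeight N p b ^ α * (Nm N b : ℝ) ^ (-s) else 0)
      (residueZeta N h s * (1 - (1 - (N p : ℝ) ^ (-α)) / (1 + residueFactor h s (N p)))) := by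
  have hsub := (hstar.hasSum_isResidue hs hs1).sub
    ((hstar.hasSum_isResidue_coprime hs hs1 p).mul_left (1 - (N p : ℝ) ^ (-α)))
  have hinv : ((N p : ℝ)⁻¹) ^ α = (N p : ℝ) ^ (-α) := by
    rw [Real.inv_rpow (Nat.cast_nonneg _), Real.rpow_neg (Nat.cast_nonneg _)]
  convert! hsub using 1
  · funext b
    by_cases hb : IsResidue h b <;> by_cases hp : b p = 0 <;>
      simp [divisorWeight, hb, hp, hinv, sub_mul]
  · ring

lemma residueZeta_nonneg (hstar : StarCond N κ θ) (hs : 0 ≤ s) (hs1 : 1 < (h + 1) * s) :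
    0 ≤ residueZeta N h s :=
  (hstar.hasSum_isResidue hs hs1).nonneg fun b => by positivity

end StarCond
end Residue

/-! ### The constants -/

section Constants

variable {P : Type*} {N : P → ℕ} {κ θ : ℝ} {h : ℕ} {q : ℝ}

lemma rpow_one_div_pow (hh : h ≠ 0) (hq : 0 ≤ q) : (q ^ (1 / (h : ℝ))) ^ h = q := by
  rw [one_div, Real.rpow_inv_natCast_pow hq hh]

lemma one_lt_rpow_one_div (hh : h ≠ 0) (hq : 1 < q) : 1 < q ^ (1 / (h : ℝ)) :=
  Real.one_lt_rpow hq (by positivity)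

lemma residueFactor_one_div (hh : h ≠ 0) (hq : 1 < q) :
    residueFactor h (1 / h) q =
      (q - q ^ (1 / (h : ℝ))) / (q ^ 2 * (q ^ (1 / (h : ℝ)) - 1)) := by
  have ha1 := one_lt_rpow_one_div hh hq
  have haq := rpow_one_div_pow hh (zero_le_one.trans hq.le)
  set a := q ^ (1 / (h : ℝ)) with ha
  have hgeom : residueFactor h (1 / h) q = ∑ j ∈ Finset.Ico (h + 1) (2 * h), (a⁻¹) ^ j := by
    refine Finset.sum_congr rfl fun j _ => ?_
    rw [Real.rpow_neg (by positivity), inv_pow, ha, Real.rpow_pow_comm (by positivity)]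
  rw [hgeom, geom_sum_Ico (inv_ne_one.2 ha1.ne') (by omega), mul_comm 2 h, pow_mul,
    pow_succ _ h, inv_pow, haq]
  have ha0 : a ≠ 0 := by positivity
  have hne : a - 1 ≠ 0 := sub_ne_zero.2 ha1.ne'
  have hq0 : q ≠ 0 := by positivity
  have hden : a⁻¹ - 1 = -(a - 1) / a := by
    field_simp
    ring
  rw [hden]
  field_simp
  ring

lemma residueZeta_one_div (hN : ∀ p, 2 ≤ N p) (hh : h ≠ 0) :
    residueZeta N h (1 / h) = gammah N h :=
  tprod_congr fun p => by rw [residueFactor_one_div hh (mod_cast hN p)]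

/-- The denominator occurring in `LhSum`. Its reciprocal at `q = N p` is the asymptotic proportion
of the multiples of `p` among the `h`-full elements. -/
def fullDenom (h : ℕ) (q : ℝ) : ℝ := q - q ^ (1 - 1 / (h : ℝ)) + 1

lemma one_le_fullDenom (h : ℕ) (hq : 1 ≤ q) : 1 ≤ fullDenom h q := by
  have hle : q ^ (1 - 1 / (h : ℝ)) ≤ q ^ (1 : ℝ) :=
    Real.rpow_le_rpow_of_exponent_le hq (sub_le_self _ (by positivity))
  rw [Real.rpow_one] at hle
  rw [fullDenom]
  linarith

lemma exists_mul_le_fullDenom (hh : h ≠ 0) : ∃ c > 0, ∀ q : ℝ, 2 ≤ q → c * q ≤ fullDenom h q := by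
  have hneg : -(1 / (h : ℝ)) < 0 := neg_lt_zero.2 (by positivity)
  refine ⟨1 - (2 : ℝ) ^ (-(1 / (h : ℝ))),
    sub_pos.2 (Real.rpow_lt_one_of_one_lt_of_neg one_lt_two hneg), fun q hq => ?_⟩
  have hq0 : 0 < q := by linarith
  have hle : q ^ (-(1 / (h : ℝ))) ≤ (2 : ℝ) ^ (-(1 / (h : ℝ))) :=
    Real.rpow_le_rpow_of_nonpos two_pos hq hneg.le
  rw [fullDenom, sub_eq_add_neg (1 : ℝ) (1 / (h : ℝ)), Real.rpow_add hq0, Real.rpow_one]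
  nlinarith

lemma fullDenom_mul_rpow_one_div (h : ℕ) (hq : 0 < q) :
    fullDenom h q * q ^ (1 / (h : ℝ)) = q * (q ^ (1 / (h : ℝ)) - 1) + q ^ (1 / (h : ℝ)) := by
  rw [fullDenom, Real.rpow_sub hq, Real.rpow_one]
  field_simp

lemma one_sub_div_one_add_residueFactor_eq (hh : h ≠ 0) (hq : 1 < q) :
    1 - (1 - q⁻¹) / (1 + residueFactor h (1 / h) q) = 1 / fullDenom h q := by
  have ha1 := one_lt_rpow_one_div hh hq
  have hD := fullDenom_mul_rpow_one_div h (zero_lt_one.trans hq)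
  have hD1 := one_le_fullDenom h hq.le
  rw [residueFactor_one_div hh hq]
  generalize q ^ (1 / (h : ℝ)) = a at *
  generalize fullDenom h q = D at *
  have hne : a - 1 ≠ 0 := sub_ne_zero.2 ha1.ne'
  have hq1 : q - 1 ≠ 0 := sub_ne_zero.2 hq.ne'
  have hfactor : 1 + (q - a) / (q ^ 2 * (a - 1)) = (q - 1) * (D * a) / (q ^ 2 * (a - 1)) := by
    rw [hD]
    field_simp
    ring
  rw [hfactor]
  field_simp
  linear_combination hD

lemma one_div_fullDenom_eq (hh : h ≠ 0) (hq : 1 ≤ q) :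
    1 / fullDenom h q = 1 / q + 1 / (q ^ (((h : ℝ) + 1) / h - 1) * fullDenom h q) -
      1 / (q ^ (2 * (h : ℝ) / h - 1) * fullDenom h q) := by
  have hq0 : 0 < q := by linarith
  have hh0 : (h : ℝ) ≠ 0 := Nat.cast_ne_zero.2 hh
  have hD := fullDenom_mul_rpow_one_div h hq0
  have hD1 := one_le_fullDenom h hq
  have hexp₁ : ((h : ℝ) + 1) / h - 1 = 1 / h := by
    field_simp
    ring
  have hexp₂ : 2 * (h : ℝ) / h - 1 = 1 := by
    field_simp
    norm_num
  rw [hexp₁, hexp₂, Real.rpow_one]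
  have ha0 : 0 < q ^ (1 / (h : ℝ)) := by positivity
  generalize q ^ (1 / (h : ℝ)) = a at *
  generalize fullDenom h q = D at *
  field_simp
  linear_combination -hD

lemma abs_one_div_rpow_mul_fullDenom_le {c r : ℝ} (hc : 0 < c)
    (hcD : c * q ≤ fullDenom h q) (hq : 0 < q) :
    |1 / (q ^ (r / (h : ℝ) - 1) * fullDenom h q)| ≤ c⁻¹ * q ^ (-(r / (h : ℝ))) := by
  have hD : 0 < fullDenom h q := (mul_pos hc hq).trans_le hcD
  rw [abs_of_nonneg (by positivity), Real.rpow_neg hq.le, ← mul_inv, one_div]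
  refine inv_anti₀ (by positivity) ?_
  calc c * q ^ (r / (h : ℝ)) = q ^ (r / (h : ℝ) - 1) * (c * q) := by
        rw [Real.rpow_sub_one hq.ne']
        field_simp
    _ ≤ q ^ (r / (h : ℝ) - 1) * fullDenom h q := by gcongr

lemma rpow_neg_le_div_log {δ y : ℝ} (hδ : 0 < δ) (hy : 1 < y) :
    y ^ (-δ) ≤ δ⁻¹ / Real.log y := by
  have hy0 : 0 < y := zero_lt_one.trans hy
  rw [Real.rpow_neg hy0.le, ← one_div, div_le_div_iff₀ (by positivity) (Real.log_pos hy), one_mul,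
    inv_mul_eq_div]
  exact Real.log_le_rpow_div hy0.le hδ

namespace StarCond

theorem exists_abs_tsum_sub_sum_primesLE_le (hstar : StarCond N κ θ) {u : P → ℝ} {C s : ℝ}
    (hs : 1 < s) (hu : ∀ p, |u p| ≤ C * (N p : ℝ) ^ (-s)) :
    ∃ K, ∀ y : ℝ, 1 < y →
      |∑' p, u p - ∑ p ∈ hstar.normFinite.primesLE y, u p| ≤ K / Real.log y := by
  set δ := (s - 1) / 2
  have hδ0 : 0 < δ := by positivity
  have husum : Summable u := .of_norm_bounded ((hstar.summable_prime_rpow_neg hs).mul_left C) hu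
  have hCN : Summable fun p => C * (N p : ℝ) ^ (-(1 + δ)) :=
    (hstar.summable_prime_rpow_neg (by linarith)).mul_left C
  have hC : ∀ p, 0 ≤ C * (N p : ℝ) ^ (-(1 + δ)) := fun p =>
    mul_nonneg (nonneg_of_mul_nonneg_left ((abs_nonneg _).trans (hu p))
      (Real.rpow_pos_of_pos (by linarith [hstar.normFinite.two_le_cast p]) _)) (by positivity)
  refine ⟨(∑' p, C * (N p : ℝ) ^ (-(1 + δ))) * δ⁻¹, fun y hy => ?_⟩
  have hy0 : 0 < y := zero_lt_one.trans hy
  set S := hstar.normFinite.primesLE y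
  have hbound : ∀ p : ((S : Set P)ᶜ : Set P),
      ‖u p‖ ≤ C * (N p : ℝ) ^ (-(1 + δ)) * y ^ (-δ) := fun p => by
    have hp0 : (0 : ℝ) < N p := by linarith [hstar.normFinite.two_le_cast p]
    have hpy : y ≤ N p := le_of_not_ge fun hle => p.2 (hstar.normFinite.mem_primesLE.2 hle)
    calc ‖u p‖ ≤ C * (N p : ℝ) ^ (-s) := hu p
      _ = C * (N p : ℝ) ^ (-(1 + δ)) * (N p : ℝ) ^ (-δ) := by
          rw [mul_assoc, ← Real.rpow_add hp0]
          congr 2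
          ring
      _ ≤ C * (N p : ℝ) ^ (-(1 + δ)) * y ^ (-δ) :=
          mul_le_mul_of_nonneg_left (Real.rpow_le_rpow_of_nonpos hy0 hpy (by linarith)) (hC p)
  rw [← husum.sum_add_tsum_compl (s := S), add_sub_cancel_left, mul_div_assoc]
  calc |∑' p : ((S : Set P)ᶜ : Set P), u p|
      ≤ (∑' p : ((S : Set P)ᶜ : Set P), C * (N p : ℝ) ^ (-(1 + δ))) * y ^ (-δ) :=
        tsum_of_norm_bounded ((hCN.subtype _).hasSum.mul_right _) hbound
    _ ≤ (∑' p, C * (N p : ℝ) ^ (-(1 + δ))) * (δ⁻¹ / Real.log y) := by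
        gcongr
        · exact tsum_nonneg hC
        · exact hCN.tsum_subtype_le _ _ hC
        · exact rpow_neg_le_div_log hδ0 hy

lemma exists_abs_LhSum_sub_sum_primesLE_le (hstar : StarCond N κ θ) (hh : h ≠ 0) {r : ℝ}
    (hr : h < r) :
    ∃ K, ∀ y : ℝ, 1 < y → |LhSum N h r - ∑ p ∈ hstar.normFinite.primesLE y,
      1 / ((N p : ℝ) ^ (r / (h : ℝ) - 1) * fullDenom h (N p))| ≤ K / Real.log y := by
  obtain ⟨c, hc, hcD⟩ := exists_mul_le_fullDenom hh
  have hh0 : (0 : ℝ) < h := by positivity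
  refine hstar.exists_abs_tsum_sub_sum_primesLE_le ((one_lt_div hh0).2 hr) (C := c⁻¹) fun p => ?_
  have hp := hstar.normFinite.two_le_cast p
  exact abs_one_div_rpow_mul_fullDenom_le hc (hcD _ hp) (by linarith)

theorem exists_abs_sum_primesLE_one_div_fullDenom_sub_le (hstar : StarCond N κ θ) {A : ℝ}
    (hA : IsMertens N A) (hh : h ≠ 0) :
    ∃ K, ∀ y : ℝ, 1 < y → |∑ p ∈ hstar.normFinite.primesLE y, 1 / fullDenom h (N p) -
      (Real.log (Real.log y) + (A + LhSum N h (h + 1) - LhSum N h (2 * h)))| ≤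
        K / Real.log y := by
  have hh1 : (1 : ℝ) ≤ h := mod_cast Nat.one_le_iff_ne_zero.2 hh
  obtain ⟨K₀, hK₀⟩ := hstar.exists_abs_sum_primesLE_one_div_sub_loglog_le hA
  obtain ⟨K₁, hK₁⟩ := hstar.exists_abs_LhSum_sub_sum_primesLE_le hh (lt_add_one (h : ℝ))
  obtain ⟨K₂, hK₂⟩ := hstar.exists_abs_LhSum_sub_sum_primesLE_le hh
    (r := 2 * (h : ℝ)) (by linarith)
  refine ⟨K₀ + K₁ + K₂, fun y hy => ?_⟩
  have hsplit := Finset.sum_congr (rfl : hstar.normFinite.primesLE y = _) fun p _ =>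
    one_div_fullDenom_eq hh (one_le_two.trans (hstar.normFinite.two_le_cast p))
  rw [Finset.sum_sub_distrib, Finset.sum_add_distrib] at hsplit
  rw [hsplit, add_div (K₀ + K₁), add_div K₀, abs_le]
  have h₀ := abs_le.1 (hK₀ y hy)
  have h₁ := abs_le.1 (hK₁ y hy)
  have h₂ := abs_le.1 (hK₂ y hy)
  constructor <;> linarith

end StarCond
end Constants

/-! ### Decomposition of full elements -/

section Decomposition

variable {P : Type*} {N : P → ℕ} {h : ℕ}

/-- The multiplicity of the `h`-residue `b` in the decomposition `k = h * a + b` of a multiplicity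
`k` of an `h`-full element. -/
def residuePart (h k : ℕ) : ℕ := if k % h = 0 then 0 else h + k % h

lemma residuePart_mem (hh : h ≠ 0) (k : ℕ) :
    residuePart h k = 0 ∨ h < residuePart h k ∧ residuePart h k < 2 * h := by
  have hlt := Nat.mod_lt k (Nat.pos_of_ne_zero hh)
  rw [residuePart]
  split_ifs <;> omega

lemma residuePart_mul_add {a b : ℕ} (hb : b = 0 ∨ h < b ∧ b < 2 * h) :
    residuePart h (h * a + b) = b := by
  rw [residuePart, Nat.mul_add_mod]
  rcases hb with rfl | hb
  · simp only [Nat.zero_mod, if_true]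
  · have hmod : b % h = b - h := by
      rw [Nat.mod_eq_sub_mod hb.1.le, Nat.mod_eq_of_lt (by omega)]
    rw [hmod, if_neg (by omega)]
    omega

lemma exists_mul_add_residuePart {k : ℕ} (hk : k = 0 ∨ h ≤ k) :
    ∃ a, h * a + residuePart h k = k := by
  rw [residuePart]
  split_ifs with hmod
  · exact ⟨k / h, Nat.mul_div_cancel' (Nat.dvd_of_mod_eq_zero hmod)⟩
  · have hhk : h ≤ k := hk.resolve_left fun hk0 => hmod (by rw [hk0, Nat.zero_mod])
    obtain ⟨c, rfl⟩ := Nat.exists_eq_add_of_le' hhk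
    refine ⟨c / h, ?_⟩
    rw [Nat.add_mod_right, add_left_comm, Nat.div_add_mod, add_comm]

lemma hFull_smul_add {a b : P →₀ ℕ} (hb : IsResidue h b) : HFull h (h • a + b) := fun p => by
  simp only [Finsupp.add_apply, Finsupp.smul_apply, smul_eq_mul]
  rcases Nat.eq_zero_or_pos (a p) with hzero | hpos
  · rw [hzero, mul_zero, zero_add]
    exact (hb p).imp_right fun hbp => hbp.1.le
  · exact Or.inr ((Nat.le_mul_of_pos_right h hpos).trans (Nat.le_add_right _ _))

lemma exists_smul_add_eq_of_hFull (hh : h ≠ 0) {m : P →₀ ℕ} (hm : HFull h m) :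
    ∃ a b : P →₀ ℕ, IsResidue h b ∧ h • a + b = m := by
  choose quot hquot using fun p => exists_mul_add_residuePart (hm p)
  have hsupp : ∀ p, quot p ≠ 0 → p ∈ m.support := fun p hp => by
    refine Finsupp.mem_support_iff.2 fun hmp => ?_
    have hzero := hquot p
    rw [hmp] at hzero
    exact mul_ne_zero hh hp (Nat.eq_zero_of_add_eq_zero_right hzero)
  refine ⟨Finsupp.onFinset m.support quot hsupp,
    m.mapRange (residuePart h) (by rw [residuePart, Nat.zero_mod, if_pos rfl]), fun p => ?_, ?_⟩
  · rw [Finsupp.mapRange_apply]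
    exact residuePart_mem hh _
  · ext p
    exact hquot p

lemma smul_add_inj_of_isResidue (hh : h ≠ 0) {a a' b b' : P →₀ ℕ} (hb : IsResidue h b)
    (hb' : IsResidue h b') (heq : h • a + b = h • a' + b') : a = a' ∧ b = b' := by
  have hbb : b = b' := by
    ext p
    rw [← residuePart_mul_add (a := a p) (hb p), ← residuePart_mul_add (a := a' p) (hb' p)]
    exact congrArg (residuePart h) (DFunLike.congr_fun heq p)
  refine ⟨Finsupp.ext fun p => Nat.eq_of_mul_eq_mul_left (Nat.pos_of_ne_zero hh) ?_, hbb⟩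
  exact DFunLike.congr_fun (add_right_cancel (hbb ▸ heq)) p

lemma pow_mul_le_iff_le_rpow_mul (hh : h ≠ 0) {u v x : ℝ} (hu : 0 ≤ u) (hv : 0 < v) (hx : 0 ≤ x) :
    u ^ h * v ≤ x ↔ u ≤ x ^ (1 / (h : ℝ)) * v ^ (-(1 / (h : ℝ))) := by
  rw [Real.rpow_neg hv.le, ← div_eq_mul_inv, ← Real.div_rpow hx hv.le, ← le_div_iff₀ hv,
    one_div, Real.le_rpow_inv_iff_of_pos hu (by positivity) (by positivity), Real.rpow_natCast]

namespace NormFinite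

lemma Nm_smul_add_le_iff (hf : NormFinite N) (hh : h ≠ 0) {x : ℝ} (hx : 0 ≤ x) (a b : P →₀ ℕ) :
    (Nm N (h • a + b) : ℝ) ≤ x ↔
      (Nm N a : ℝ) ≤ x ^ (1 / (h : ℝ)) * (Nm N b : ℝ) ^ (-(1 / (h : ℝ))) := by
  rw [Nm_add, Nm_smul, Nat.cast_mul, Nat.cast_pow,
    pow_mul_le_iff_le_rpow_mul hh (Nat.cast_nonneg _) (hf.Nm_pos b) hx]

theorem sum_hFull_eq_sum_isResidue (hf : NormFinite N) (hh : h ≠ 0) {x : ℝ} (hx : 0 ≤ x)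
    (g : (P →₀ ℕ) → ℝ) :
    ∑ m ∈ hf.elementsLE x with HFull h m, g m =
      ∑ b ∈ hf.elementsLE x with IsResidue h b,
        ∑ a ∈ hf.elementsLE (x ^ (1 / (h : ℝ)) * (Nm N b : ℝ) ^ (-(1 / (h : ℝ)))),
          g (h • a + b) := by
  rw [Finset.sum_sigma']
  symm
  refine Finset.sum_nbij (fun s => h • s.2 + s.1) (fun ⟨b, a⟩ hs => ?_)
    (fun ⟨b, a⟩ hs ⟨b', a'⟩ hs' heq => ?_) (fun m hm => ?_) fun _ _ => rfl
  · simp only [Finset.mem_sigma, Finset.mem_filter, mem_elementsLE] at hs ⊢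
    exact ⟨(hf.Nm_smul_add_le_iff hh hx a b).2 hs.2, hFull_smul_add hs.1.2⟩
  · simp only [Finset.coe_sigma, Set.mem_sigma_iff, Finset.mem_coe, Finset.mem_filter] at hs hs'
    obtain ⟨rfl, rfl⟩ := smul_add_inj_of_isResidue hh hs.1.2 hs'.1.2 heq
    rfl
  · simp only [Finset.coe_filter, Set.mem_ofPred_eq, mem_elementsLE] at hm
    obtain ⟨a, b, hb, rfl⟩ := exists_smul_add_eq_of_hFull hh hm.2
    refine ⟨⟨b, a⟩, ?_, rfl⟩
    simp only [Finset.coe_sigma, Set.mem_sigma_iff, Finset.mem_coe, Finset.mem_filter,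
      mem_elementsLE]
    exact ⟨⟨(hf.Nm_mono le_add_self).trans hm.1, hb⟩, (hf.Nm_smul_add_le_iff hh hx a b).1 hm.1⟩

lemma card_filter_smul_add_ne_zero (hf : NormFinite N) (hh : h ≠ 0) (z : ℝ) (p : P)
    (b : P →₀ ℕ) :
    (({a ∈ hf.elementsLE z | (h • a + b) p ≠ 0}.card : ℕ) : ℝ) =
      hf.count (z * divisorWeight N p b) := by
  have hiff : ∀ a : P →₀ ℕ, (h • a + b) p ≠ 0 ↔ Finsupp.single p 1 ≤ a ∨ b p ≠ 0 := fun a => by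
    rw [Finsupp.add_apply, Finsupp.smul_apply, smul_eq_mul, Finsupp.single_le_iff,
      Nat.one_le_iff_ne_zero, Ne, Nat.add_eq_zero_iff, Nat.mul_eq_zero]
    tauto
  simp only [hiff, divisorWeight, count]
  by_cases hb : b p = 0
  · have hshift := hf.sum_elementsLE_div_add (Finsupp.single p 1) z fun _ => 1
    simp only [Finset.sum_const, nsmul_eq_mul, mul_one, Nm_single, pow_one] at hshift
    simp only [hb, ne_eq, not_true_eq_false, or_false, if_true, ← div_eq_mul_inv, hshift]
  · simp only [hb, ne_eq, not_false_eq_true, or_true, Finset.filter_true, if_false, mul_one]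

/-- The number of `h`-full multiples of `p` of norm at most `x`. -/
def fullMultiples (hf : NormFinite N) (h : ℕ) (x : ℝ) (p : P) : ℝ :=
  {m ∈ hf.elementsLE x | HFull h m ∧ m p ≠ 0}.card

lemma fullMultiples_eq_sum (hf : NormFinite N) (hh : h ≠ 0) {x : ℝ} (hx : 0 ≤ x) (p : P) :
    hf.fullMultiples h x p = ∑ b ∈ hf.elementsLE x with IsResidue h b,
      hf.count (x ^ (1 / (h : ℝ)) * (Nm N b : ℝ) ^ (-(1 / (h : ℝ))) * divisorWeight N p b) := by
  have hsum := hf.sum_hFull_eq_sum_isResidue hh hx fun m => if m p ≠ 0 then 1 else 0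
  simpa only [fullMultiples, Finset.sum_boole, Finset.filter_filter,
    hf.card_filter_smul_add_ne_zero hh] using hsum

lemma divisorWeight_pos (hf : NormFinite N) (p : P) (b : P →₀ ℕ) : 0 < divisorWeight N p b := by
  have hp := hf.two_le_cast p
  rw [divisorWeight]
  split_ifs <;> positivity

lemma divisorWeight_le_one (hf : NormFinite N) (p : P) (b : P →₀ ℕ) : divisorWeight N p b ≤ 1 := by
  rw [divisorWeight]
  split_ifs
  · exact inv_le_one_of_one_le₀ (one_le_two.trans (hf.two_le_cast p))
  · exact le_rfl

theorem hasSum_fullMultiples (hf : NormFinite N) (hh : h ≠ 0) {x : ℝ} (hx : 0 ≤ x) (p : P) :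
    HasSum (fun b => if IsResidue h b then
        hf.count (x ^ (1 / (h : ℝ)) * (Nm N b : ℝ) ^ (-(1 / (h : ℝ))) * divisorWeight N p b) else 0)
      (hf.fullMultiples h x p) := by
  rw [hf.fullMultiples_eq_sum hh hx, Finset.sum_filter]
  refine hasSum_sum_of_ne_finset_zero fun b hb => ?_
  have hlt : x ^ (1 / (h : ℝ)) * (Nm N b : ℝ) ^ (-(1 / (h : ℝ))) < 1 := by
    refine lt_of_not_ge fun hle => hb (hf.mem_elementsLE.2 ?_)
    simpa only [one_pow, one_mul] using
      (pow_mul_le_iff_le_rpow_mul hh zero_le_one (hf.Nm_pos b) hx).2 hle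
  rw [hf.count_eq_zero, ite_self]
  exact (mul_le_of_le_one_right (by positivity) (hf.divisorWeight_le_one p b)).trans_lt hlt

lemma mem_primesLE_rpow_of_hFull (hf : NormFinite N) (hh : h ≠ 0) {x : ℝ} {m : P →₀ ℕ}
    (hm : HFull h m) (hmx : (Nm N m : ℝ) ≤ x) {p : P} (hp : m p ≠ 0) :
    p ∈ hf.primesLE (x ^ (1 / (h : ℝ))) := by
  have hx : 0 ≤ x := (hf.Nm_pos m).le.trans hmx
  have hle := (hf.Nm_mono (Finsupp.single_le_iff.2 ((hm p).resolve_left hp))).trans hmx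
  rw [Nm_single, Nat.cast_pow] at hle
  rwa [mem_primesLE, one_div, Real.le_rpow_inv_iff_of_pos (Nat.cast_nonneg _) hx (by positivity),
    Real.rpow_natCast]

theorem finsum_omegaM_eq_sum_fullMultiples (hf : NormFinite N) (hh : h ≠ 0) (x : ℝ) :
    ∑ᶠ m ∈ {m : P →₀ ℕ | HFull h m ∧ (Nm N m : ℝ) ≤ x}, (omegaM m : ℝ) =
      ∑ p ∈ hf.primesLE (x ^ (1 / (h : ℝ))), hf.fullMultiples h x p := by
  have hset : {m : P →₀ ℕ | HFull h m ∧ (Nm N m : ℝ) ≤ x} =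
      ({m ∈ hf.elementsLE x | HFull h m} : Finset (P →₀ ℕ)) := by
    ext m
    simp only [Set.mem_ofPred_eq, Finset.coe_filter, mem_elementsLE, and_comm]
  have homega : ∀ m ∈ {m ∈ hf.elementsLE x | HFull h m}, (omegaM m : ℝ) =
      ∑ p ∈ hf.primesLE (x ^ (1 / (h : ℝ))), if m p ≠ 0 then 1 else 0 := fun m hm => by
    obtain ⟨hmx, hmf⟩ := Finset.mem_filter.1 hm
    rw [Finset.sum_boole, omegaM]
    congr 2
    ext p
    rw [Finset.mem_filter, Finsupp.mem_support_iff, iff_and_self]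
    exact hf.mem_primesLE_rpow_of_hFull hh hmf (hf.mem_elementsLE.1 hmx)
  rw [hset, finsum_mem_coe_finset, Finset.sum_congr rfl homega, Finset.sum_comm]
  simp only [Finset.sum_boole, Finset.filter_filter, fullMultiples]

end NormFinite
end Decomposition

/-! ### The first moment -/

section FirstMoment

variable {P : Type*} {N : P → ℕ} {κ θ : ℝ} {h : ℕ}

namespace StarCond

lemma hasSum_isResidue_divisorWeight_one (hstar : StarCond N κ θ) (hh : h ≠ 0) (p : P) :
    HasSum (fun b : P →₀ ℕ =>
        if IsResidue h b then divisorWeight N p b * (Nm N b : ℝ) ^ (-(1 / (h : ℝ))) else 0)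
      (gammah N h * (1 / fullDenom h (N p))) := by
  have hh0 : (0 : ℝ) < h := by positivity
  have hs : 1 < ((h : ℝ) + 1) * (1 / h) := by
    rw [mul_one_div, one_lt_div hh0]
    exact lt_add_one _
  have hp : (1 : ℝ) < N p := one_lt_two.trans_le (hstar.normFinite.two_le_cast p)
  simpa only [Real.rpow_one, Real.rpow_neg_one, residueZeta_one_div hstar.normFinite.two_le hh,
    one_sub_div_one_add_residueFactor_eq hh hp] using
    hstar.hasSum_isResidue_divisorWeight (by positivity) hs 1 p

lemma norm_ite_count_sub_le (hstar : StarCond N κ θ) {α C : ℝ}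
    (hC : ∀ x : ℝ, 0 < x → |hstar.normFinite.count x - κ * x| ≤ C * x ^ α) {y : ℝ} (hy : 0 < y)
    (p : P) (b : P →₀ ℕ) :
    ‖(if IsResidue h b then hstar.normFinite.count
          (y * (Nm N b : ℝ) ^ (-(1 / (h : ℝ))) * divisorWeight N p b) else 0) -
        κ * y * (if IsResidue h b then
          divisorWeight N p b * (Nm N b : ℝ) ^ (-(1 / (h : ℝ))) else 0)‖ ≤
      C * y ^ α * (if IsResidue h b then
        divisorWeight N p b ^ α * (Nm N b : ℝ) ^ (-(α / h)) else 0) := by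
  have hw := hstar.normFinite.divisorWeight_pos p b
  have hb := hstar.normFinite.Nm_pos b
  split_ifs
  · have hcount := hC (y * (Nm N b : ℝ) ^ (-(1 / (h : ℝ))) * divisorWeight N p b) (by positivity)
    rw [Real.mul_rpow (by positivity) hw.le, Real.mul_rpow hy.le (by positivity),
      ← Real.rpow_mul hb.le, neg_mul, one_div_mul_eq_div] at hcount
    convert hcount using 1
    · rw [Real.norm_eq_abs]
      ring_nf
    · ring
  · simp only [mul_zero, sub_zero, norm_zero, le_refl]

theorem exists_abs_fullMultiples_sub_le (hstar : StarCond N κ θ) (hh : h ≠ 0) {α : ℝ} (hα : θ ≤ α)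
    (hα1 : α < 1) (hαh : 1 < ((h : ℝ) + 1) * (α / h)) :
    ∃ C, 0 ≤ C ∧ ∀ x : ℝ, 0 < x → ∀ p,
      |hstar.normFinite.fullMultiples h x p -
          κ * gammah N h * x ^ (1 / (h : ℝ)) * (1 / fullDenom h (N p))| ≤
        C * (x ^ (1 / (h : ℝ))) ^ α * (N p : ℝ) ^ (-α) := by
  set hf := hstar.normFinite
  obtain ⟨C, hC⟩ := hstar.exists_abs_count_sub_le hα hα1
  have hC0 : 0 ≤ C := by
    simpa only [Real.one_rpow, mul_one] using (abs_nonneg _).trans (hC 1 one_pos)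
  have hα0 : 0 ≤ α := hstar.2.1.trans hα
  have hZ := hstar.residueZeta_nonneg (s := α / h) (by positivity) hαh
  refine ⟨C * (residueZeta N h (α / h) * (h + 1)), by positivity, fun x hx p => ?_⟩
  set y := x ^ (1 / (h : ℝ))
  have hy : 0 < y := by positivity
  have hmain := ((hf.hasSum_fullMultiples hh hx.le p).sub
    ((hstar.hasSum_isResidue_divisorWeight_one hh p).mul_left (κ * y))).norm_le_of_bounded
    ((hstar.hasSum_isResidue_divisorWeight (by positivity) hαh α p).mul_left (C * y ^ α))
    (hstar.norm_ite_count_sub_le hC hy p)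
  have hweight := one_sub_div_one_add_residueFactor_le hh hα0
    (one_le_two.trans (hf.two_le_cast p))
  calc _ = ‖hf.fullMultiples h x p - κ * y * (gammah N h * (1 / fullDenom h (N p)))‖ := by
        rw [Real.norm_eq_abs]
        ring_nf
    _ ≤ _ := hmain
    _ ≤ C * y ^ α * (residueZeta N h (α / h) * ((h + 1) * (N p : ℝ) ^ (-α))) := by gcongr
    _ = _ := by ring

lemma exists_abs_sum_fullMultiples_sub_le (hstar : StarCond N κ θ) (hh : h ≠ 0) :
    ∃ C, ∀ x : ℝ, 1 < x →
      |∑ p ∈ hstar.normFinite.primesLE (x ^ (1 / (h : ℝ))), hstar.normFinite.fullMultiples h x p -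
          κ * gammah N h * x ^ (1 / (h : ℝ)) *
            ∑ p ∈ hstar.normFinite.primesLE (x ^ (1 / (h : ℝ))), 1 / fullDenom h (N p)| ≤
        C * (x ^ (1 / (h : ℝ)) / Real.log (x ^ (1 / (h : ℝ)))) := by
  have hh0 : (0 : ℝ) < h := by positivity
  obtain ⟨α, hα, hα1⟩ := exists_between
    (max_lt hstar.2.2.1 ((div_lt_one (by positivity)).2 (lt_add_one (h : ℝ))))
  obtain ⟨hθα, hhα⟩ := max_lt_iff.1 hα
  have hαh : 1 < ((h : ℝ) + 1) * (α / h) := by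
    rwa [← mul_div_assoc, one_lt_div hh0, ← div_lt_iff₀' (by positivity)]
  obtain ⟨C, hC0, hC⟩ := hstar.exists_abs_fullMultiples_sub_le hh hθα.le hα1 hαh
  obtain ⟨C', hC'⟩ := hstar.exists_sum_primesLE_rpow_neg_le (hstar.2.1.trans hθα.le) hα1
  refine ⟨C * C', fun x hx => ?_⟩
  have hCx := hC x (zero_lt_one.trans hx)
  have hy1 : 1 < x ^ (1 / (h : ℝ)) := one_lt_rpow_one_div hh hx
  set y := x ^ (1 / (h : ℝ))
  have hy : 0 < y := zero_lt_one.trans hy1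
  rw [Finset.mul_sum, ← Finset.sum_sub_distrib]
  calc _ ≤ ∑ p ∈ hstar.normFinite.primesLE y, C * y ^ α * (N p : ℝ) ^ (-α) :=
        (Finset.abs_sum_le_sum_abs _ _).trans (Finset.sum_le_sum fun p _ => hCx p)
    _ ≤ C * y ^ α * (C' * (y ^ (1 - α) / Real.log y)) := by
        rw [← Finset.mul_sum]
        gcongr
        exact hC' y hy1
    _ = C * C' * (y ^ α * y ^ (1 - α) / Real.log y) := by ring
    _ = C * C' * (y / Real.log y) := by rw [← Real.rpow_add hy, add_sub_cancel, Real.rpow_one]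

theorem exists_abs_finsum_omegaM_sub_le (hstar : StarCond N κ θ) {A : ℝ} (hA : IsMertens N A)
    (hh : h ≠ 0) :
    ∃ C, ∀ x : ℝ, 1 < x →
      |(∑ᶠ m ∈ {m : P →₀ ℕ | HFull h m ∧ (Nm N m : ℝ) ≤ x}, (omegaM m : ℝ))
          - κ * gammah N h * (x ^ (1 / (h : ℝ)) * Real.log (Real.log x))
          - κ * gammah N h * D1const N h A * x ^ (1 / (h : ℝ))| ≤
        C * (x ^ (1 / (h : ℝ)) / Real.log x) := by
  obtain ⟨C, hC⟩ := hstar.exists_abs_sum_fullMultiples_sub_le hh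
  obtain ⟨K, hK⟩ := hstar.exists_abs_sum_primesLE_one_div_fullDenom_sub_le hA hh
  refine ⟨(C + |κ * gammah N h| * K) * h, fun x hx => ?_⟩
  have hh0 : (0 : ℝ) < h := by positivity
  have hlog : Real.log (x ^ (1 / (h : ℝ))) = Real.log x / h := by
    rw [Real.log_rpow (zero_lt_one.trans hx), one_div_mul_eq_div]
  have hy : 0 < x ^ (1 / (h : ℝ)) := by positivity
  have hlogx : 0 < Real.log x := Real.log_pos hx
  have hKy := hK _ (one_lt_rpow_one_div hh hx)
  have hCx := hC x hx
  rw [hlog] at hCx hKy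
  rw [Real.log_div hlogx.ne' hh0.ne'] at hKy
  rw [hstar.normFinite.finsum_omegaM_eq_sum_fullMultiples hh, D1const]
  set y := x ^ (1 / (h : ℝ))
  set S := ∑ p ∈ hstar.normFinite.primesLE y, hstar.normFinite.fullMultiples h x p
  set T := ∑ p ∈ hstar.normFinite.primesLE y, 1 / fullDenom h (N p)
  calc _ = |(S - κ * gammah N h * y * T) + κ * gammah N h * y * (T - (Real.log (Real.log x) -
          Real.log h + (A + LhSum N h (h + 1) - LhSum N h (2 * h))))| := by ring_nf
    _ ≤ C * (y / (Real.log x / h)) + |κ * gammah N h * y| * (K / (Real.log x / h)) := by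
        grw [abs_add_le, hCx, abs_mul, hKy]
    _ = _ := by
        rw [abs_mul, abs_of_pos hy]
        field_simp

end StarCond

theorem first_moment_omega_hfull_general (hstar : StarCond N κ θ) {A : ℝ} (hA : IsMertens N A)
    (hh : h ≠ 0) :
    (fun x : ℝ =>
        (∑ᶠ m ∈ {m : P →₀ ℕ | HFull h m ∧ (Nm N m : ℝ) ≤ x}, (omegaM m : ℝ))
          - κ * gammah N h * (x ^ (1 / (h : ℝ)) * Real.log (Real.log x))
          - κ * gammah N h * D1const N h A * x ^ (1 / (h : ℝ)))
      =O[atTop] fun x : ℝ => x ^ (1 / (h : ℝ)) / Real.log x := by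
  obtain ⟨C, hC⟩ := hstar.exists_abs_finsum_omegaM_sub_le hA hh
  refine IsBigO.of_bound C ((eventually_gt_atTop 1).mono fun x hx => ?_)
  have hlogx : 0 < Real.log x := Real.log_pos hx
  rw [Real.norm_eq_abs, Real.norm_of_nonneg (by positivity)]
  exact hC x hx

end FirstMoment

/-- First moment of `ω` over `h`-full elements. -/
theorem first_moment_omega_hfull {P : Type*} [Countable P] (N : P → ℕ)
    (hN : ∀ p, 2 ≤ N p) (κ θ : ℝ) (hstar : StarCond N κ θ)
    (A : ℝ) (hA : IsMertens N A) (h : ℕ) (hh : 2 ≤ h) :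
    (fun x : ℝ =>
        (∑ᶠ m ∈ {m : P →₀ ℕ | HFull h m ∧ (Nm N m : ℝ) ≤ x}, (omegaM m : ℝ))
          - κ * gammah N h * (x ^ (1 / (h : ℝ)) * Real.log (Real.log x))
          - κ * gammah N h * D1const N h A * x ^ (1 / (h : ℝ)))
      =O[atTop] fun x : ℝ => x ^ (1 / (h : ℝ)) / Real.log x :=
  first_moment_omega_hfull_general hstar hA (by omega)
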